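/- arXiv:2006.10549 — 5 statements merged into one kernel-verified Lean document; each statement's English description precedes it below -/
import Mathlib

section
/- Let k ≥ 2 be an integer and let f be a cusp form of weight 2k for SL₂(ℤ). Then for all τ ∈ ℍ one has (R_{2−2k}^{k−1} f^*)(τ) = −((2k−2)!/(4π)^{2k−1}) · conj((R_{2−2k}^{k−1} ℰ_f)(τ)). -/
open Complex MeasureTheory
open scoped Real

noncomputable section

namespace LHMF

abbrev SL2Z := Matrix.SpecialLinearGroup (Fin 2) ℤ

/-- Möbius action of `SL₂(ℤ)` on `ℂ`. -/
def moeb (M : SL2Z) (τ : ℂ) : ℂ :=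
  ((M.1 0 0 : ℂ) * τ + (M.1 0 1 : ℂ)) / ((M.1 1 0 : ℂ) * τ + (M.1 1 1 : ℂ))

/-- Automorphy factor `j(M,τ) = cτ + d`. -/
def jfac (M : SL2Z) (τ : ℂ) : ℂ := (M.1 1 0 : ℂ) * τ + (M.1 1 1 : ℂ)

/-- `E₁`: union of all `SL₂(ℤ)`-translates of the positive imaginary axis. -/
def E1 : Set ℂ := ⋃ M : SL2Z, (fun y : ℝ => moeb M ((y : ℂ) * Complex.I)) '' Set.Ioi 0

/-- Wirtinger derivative `∂f/∂τ`. -/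
def dtau (f : ℂ → ℂ) (τ : ℂ) : ℂ :=
  (fderiv ℝ f τ 1 - Complex.I * fderiv ℝ f τ Complex.I) / 2

/-- Wirtinger derivative `∂f/∂τ̄`. -/
def dtaubar (f : ℂ → ℂ) (τ : ℂ) : ℂ :=
  (fderiv ℝ f τ 1 + Complex.I * fderiv ℝ f τ Complex.I) / 2

/-- The operator `ξ_κ f = 2i v^κ conj(∂f/∂τ̄)`. -/
def xiOp (κ : ℤ) (f : ℂ → ℂ) (τ : ℂ) : ℂ :=
  2 * Complex.I * ((τ.im : ℂ) ^ κ) * starRingEnd ℂ (dtaubar f τ)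

/-- The operator `𝒟 = (1/(2πi)) ∂/∂τ`. -/
def Dop (f : ℂ → ℂ) : ℂ → ℂ := fun τ => (2 * (π : ℂ) * Complex.I)⁻¹ * dtau f τ

/-- Maass raising operator of weight `κ`. -/
def raiseOp (κ : ℤ) (f : ℂ → ℂ) (τ : ℂ) : ℂ :=
  2 * Complex.I * dtau f τ + (κ : ℂ) * (τ.im : ℂ)⁻¹ * f τ

/-- Iterated raising operator `R_κ^m = R_{κ+2m-2} ∘ ⋯ ∘ R_{κ+2} ∘ R_κ`. -/
def raiseIter (κ : ℤ) : ℕ → (ℂ → ℂ) → (ℂ → ℂ)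
  | 0 => fun f => f
  | m + 1 => fun f => raiseOp (κ + 2 * m) (raiseIter κ m f)

/-- Petersson's Poincaré series `H_{k,k-1}(z,τ)`. -/
def Hpet (k : ℕ) (z τ : ℂ) : ℂ :=
  ∑' M : SL2Z, jfac M τ ^ (2 * k - 2) * ((moeb M τ).im : ℂ) ^ (2 * k - 1) *
    (z - moeb M τ)⁻¹ * (z - starRingEnd ℂ (moeb M τ)) ^ (1 - 2 * (k : ℤ))

/-- The locally harmonic Maass form `H_{1-k,n}`. -/
def Hlhmf (k n : ℕ) (τ : ℂ) : ℂ :=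
  (2 * Complex.I) ^ (2 * k - 2) / (2 * (π : ℂ)) *
    ∫ y in Set.Ioi (0 : ℝ), Hpet k ((y : ℂ) * Complex.I) τ * (y : ℂ) ^ n

/-- The cusp form `R_n` of weight `2k`. -/
def Rnform (k n : ℕ) (τ : ℂ) : ℂ :=
  (2 : ℂ) ^ (2 * k - 3) / (Complex.I ^ (2 * k - 1 - n) * (Nat.choose (2 * k - 2) n : ℂ) * (π : ℂ)) *
    ∑' M : SL2Z, jfac M τ ^ (-2 * (k : ℤ)) * moeb M τ ^ (-(n : ℤ) - 1)

/-- Holomorphic Eichler integral of `f` (weight `2k`), along a vertical path. -/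
def eichlerHol (k : ℕ) (f : ℂ → ℂ) (τ : ℂ) : ℂ :=
  (-2 * (π : ℂ) * Complex.I) ^ (2 * k - 1) / (Nat.factorial (2 * k - 2) : ℂ) *
    ∫ t in Set.Ioi (0 : ℝ), f (τ + (t : ℂ) * Complex.I) * ((t : ℂ) * Complex.I) ^ (2 * k - 2) *
      Complex.I

/-- Non-holomorphic Eichler integral `f^*` of `f` (weight `2k`), along a vertical path. -/
def eichlerStar (k : ℕ) (f : ℂ → ℂ) (τ : ℂ) : ℂ :=
  (-2 * Complex.I) ^ (1 - 2 * (k : ℤ)) *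
    ∫ t in Set.Ioi (0 : ℝ),
      starRingEnd ℂ (f (-(starRingEnd ℂ (-(starRingEnd ℂ τ) + (t : ℂ) * Complex.I)))) *
        (-(starRingEnd ℂ τ) + (t : ℂ) * Complex.I + τ) ^ (2 * k - 2) * Complex.I

/-- Bernoulli polynomial evaluated at a complex number. -/
def bernC (m : ℕ) (τ : ℂ) : ℂ := Polynomial.aeval τ (Polynomial.bernoulli m)

/-- Periodized Bernoulli polynomial `𝔹_m(τ) = B_m(τ - ⌊Re τ⌋)`. -/
def bernPer (m : ℕ) (τ : ℂ) : ℂ := bernC m (τ - (⌊τ.re⌋ : ℂ))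

/-- The period `r_n(E_{2k})` of the Eisenstein series, for `0 < n < 2k-2`. -/
def rnE (k n : ℕ) : ℚ :=
  if n % 2 = 0 then 0
  else (-1) ^ ((n - 1) / 2) * (2 * (k : ℚ)) * bernoulli (n + 1) * bernoulli (2 * k - 1 - n) /
    (bernoulli (2 * k) * ((n : ℚ) + 1) * ((2 * k - 1 - n : ℕ) : ℚ))

/-- The local polynomial `P_{1-k,n}`. -/
def Ppoly (k n : ℕ) (τ : ℂ) : ℂ :=
  (rnE k n : ℂ)
  + (-Complex.I) ^ (n + 1) / ((n : ℂ) + 1) * bernPer (n + 1) τ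
  + Complex.I ^ (n + 1) / ((2 * k - 1 - n : ℕ) : ℂ) * bernPer (2 * k - 1 - n) τ
  + Complex.I ^ (1 - (n : ℤ)) / 2 *
      ∑' M : {M : SL2Z // 0 < M.1 0 0 * M.1 1 0 ∧ (moeb M τ).re < 0},
        jfac M.1 τ ^ (2 * k - 2) *
          (moeb M.1 τ ^ n - (-1 : ℂ) ^ n * moeb M.1 τ ^ (2 * k - 2 - n))

/-- The binary quadratic form `[a,b,c]` evaluated at complex arguments. -/
def qfC (a b c : ℤ) (x y : ℂ) : ℂ := (a : ℂ) * x ^ 2 + (b : ℂ) * x * y + (c : ℂ) * y ^ 2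

/-- CM point of the positive definite form `[a,b,c]`. -/
def cmPoint (a b c : ℤ) : ℂ :=
  (-(b : ℂ) + Complex.I * ((Real.sqrt (((b ^ 2 - 4 * a * c).natAbs : ℝ))) : ℂ)) / (2 * (a : ℂ))

/-- The form `[a,b,c] ∘ M`. -/
def qfComp (a b c : ℤ) (M : SL2Z) : ℤ × ℤ × ℤ :=
  (a * (M.1 0 0) ^ 2 + b * (M.1 0 0) * (M.1 1 0) + c * (M.1 1 0) ^ 2,
   2 * a * (M.1 0 0) * (M.1 0 1) + b * ((M.1 0 0) * (M.1 1 1) + (M.1 0 1) * (M.1 1 0)) +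
     2 * c * (M.1 1 0) * (M.1 1 1),
   a * (M.1 0 1) ^ 2 + b * (M.1 0 1) * (M.1 1 1) + c * (M.1 1 1) ^ 2)

/-- `w_P`: order of the stabilizer of `P = [a,b,c]` in `PSL₂(ℤ)` (half the order of the
stabilizer in `SL₂(ℤ)`, which contains `±1`). -/
def wP (a b c : ℤ) : ℕ := Nat.card {M : SL2Z // qfComp a b c M = (a, b, c)} / 2

/-- The meromorphic modular form `f_{k,P}` for `P = [a,b,c]`. -/
def fkP (k : ℕ) (a b c : ℤ) (z : ℂ) : ℂ :=
  (((((b ^ 2 - 4 * a * c).natAbs : ℝ)) ^ ((k : ℝ) - 1 / 2) : ℝ) : ℂ) /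
      (2 * (π : ℂ) * (wP a b c : ℂ)) *
    ∑' M : SL2Z, (qfC a b c ((M.1 0 0 : ℂ) * z + (M.1 0 1 : ℂ))
      ((M.1 1 0 : ℂ) * z + (M.1 1 1 : ℂ))) ^ (-(k : ℤ))

/-- The `n`-th period `r_n(f) = ∫₀^∞ f(iy) y^n dy`. -/
def periodN (n : ℕ) (f : ℂ → ℂ) : ℂ :=
  ∫ y in Set.Ioi (0 : ℝ), f ((y : ℂ) * Complex.I) * (y : ℂ) ^ n

/-- Epstein zeta function of `[a,b,c]` at an integer `k`. -/
def epstein (a b c : ℤ) (k : ℕ) : ℝ :=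
  ∑' p : {p : ℤ × ℤ // p ≠ (0, 0)},
    ((a * p.1.1 ^ 2 + b * p.1.1 * p.1.2 + c * p.1.2 ^ 2 : ℤ) : ℝ) ^ (-(k : ℤ))

/-- `sgn(M)` for `M = (a,b;c,d)`: `sgn(ac)` if `ac ≠ 0`, else `sgn(bd)`. -/
def sgnM (M : SL2Z) : ℤ :=
  if M.1 0 0 * M.1 1 0 ≠ 0 then Int.sign (M.1 0 0 * M.1 1 0) else Int.sign (M.1 0 1 * M.1 1 1)

/-- Upper incomplete Gamma function `Γ(s,x)` for a natural number `s`. -/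
def GammaUpper (s : ℕ) (x : ℝ) : ℝ := ∫ t in Set.Ioi x, Real.exp (-t) * t ^ (s - 1)

/-- A cusp form of weight `2k` for `SL₂(ℤ)`, as a function on `ℂ` (holomorphic on `ℍ`,
modular of weight `2k`, vanishing at the cusp `i∞`). -/
def IsCuspForm2k (k : ℕ) (f : ℂ → ℂ) : Prop :=
  (∀ τ : ℂ, 0 < τ.im → DifferentiableAt ℂ f τ) ∧
  (∀ (M : SL2Z) (τ : ℂ), 0 < τ.im → f (moeb M τ) = jfac M τ ^ (2 * k) * f τ) ∧
  Filter.Tendsto f (Filter.comap Complex.im Filter.atTop) (nhds 0)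

/-- `f` is real differentiable at `τ` and `2i ∂f/∂τ = d` there. -/
def HasW (f : ℂ → ℂ) (d τ : ℂ) : Prop :=
  DifferentiableAt ℝ f τ ∧ 2 * Complex.I * dtau f τ = d

lemma HasW.add {f g : ℂ → ℂ} {d e τ : ℂ} (hf : HasW f d τ) (hg : HasW g e τ) :
    HasW (fun z => f z + g z) (d + e) τ := by
  obtain ⟨hf, rfl⟩ := hf
  obtain ⟨hg, rfl⟩ := hg
  refine ⟨hf.add hg, ?_⟩
  unfold dtau
  rw [fderiv_fun_add hf hg]
  simp only [_root_.add_apply]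
  ring

lemma HasW.mul {f g : ℂ → ℂ} {d e τ : ℂ} (hf : HasW f d τ) (hg : HasW g e τ) :
    HasW (fun z => f z * g z) (f τ * e + g τ * d) τ := by
  obtain ⟨hf, rfl⟩ := hf
  obtain ⟨hg, rfl⟩ := hg
  refine ⟨hf.mul hg, ?_⟩
  unfold dtau
  rw [fderiv_fun_mul hf hg]
  simp only [_root_.add_apply, _root_.smul_apply, smul_eq_mul]
  ring

lemma HasW.const (c τ : ℂ) : HasW (fun _ => c) 0 τ := by
  refine ⟨differentiableAt_const _, ?_⟩
  simp [dtau]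

lemma HasW.const_mul {f : ℂ → ℂ} {d τ : ℂ} (c : ℂ) (hf : HasW f d τ) :
    HasW (fun z => c * f z) (c * d) τ := by
  simpa using (HasW.const c τ).mul hf

lemma HasW.congr {f g : ℂ → ℂ} {d τ : ℂ} (hf : HasW f d τ) (h : g =ᶠ[nhds τ] f) :
    HasW g d τ := by
  obtain ⟨hf, rfl⟩ := hf
  refine ⟨hf.congr_of_eventuallyEq h, ?_⟩
  unfold dtau
  rw [h.fderiv_eq]

lemma HasW.of_hasDerivAt {f : ℂ → ℂ} {d τ : ℂ} (hf : HasDerivAt f d τ) :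
    HasW f (2 * Complex.I * d) τ := by
  have h := hf.complexToReal_fderiv
  refine ⟨h.differentiableAt, ?_⟩
  unfold dtau
  rw [h.fderiv]
  simp
  linear_combination (-d / 2) * Complex.I_sq

lemma HasW.conj_of_hasDerivAt {f : ℂ → ℂ} {d τ : ℂ} (hf : HasDerivAt f d τ) :
    HasW (fun z => starRingEnd ℂ (f z)) 0 τ := by
  have h := (Complex.conjCLE : ℂ →L[ℝ] ℂ).hasFDerivAt.comp τ hf.complexToReal_fderiv
  have h' : HasFDerivAt (fun z => starRingEnd ℂ (f z)) _ τ := h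
  refine ⟨h'.differentiableAt, ?_⟩
  unfold dtau
  rw [h'.fderiv]
  simp
  linear_combination (starRingEnd ℂ d) * Complex.I_sq

lemma HasW.im (τ : ℂ) : HasW (fun z => (z.im : ℂ)) 1 τ := by
  have h := (Complex.ofRealCLM.comp Complex.imCLM).hasFDerivAt (x := τ)
  have h' : HasFDerivAt (fun z : ℂ => (z.im : ℂ)) _ τ := h
  refine ⟨h'.differentiableAt, ?_⟩
  unfold dtau
  rw [h'.fderiv]
  simp
  linear_combination -Complex.I_sq

lemma HasW.im_inv {τ : ℂ} (hτ : 0 < τ.im) :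
    HasW (fun z => (z.im : ℂ)⁻¹) (-((τ.im : ℂ)⁻¹) ^ 2) τ := by
  have hv : (τ.im : ℂ) ≠ 0 := by exact_mod_cast hτ.ne'
  have hd : DifferentiableAt ℝ (fun z : ℂ => (z.im : ℂ)⁻¹) τ := (HasW.im τ).1.inv hv
  refine ⟨hd, ?_⟩
  have h1 := (HasW.im τ).mul ⟨hd, rfl⟩
  have h2 : HasW (fun z : ℂ => (z.im : ℂ) * (z.im : ℂ)⁻¹) 0 τ := by
    refine (HasW.const 1 τ).congr ?_
    filter_upwards [(isOpen_lt continuous_const Complex.continuous_im).mem_nhds hτ] with z hz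
    exact mul_inv_cancel₀ (by exact_mod_cast (ne_of_gt hz))
  have h3 := h1.2.symm.trans h2.2
  field_simp
  field_simp at h3
  linear_combination h3

lemma HasW.im_inv_pow {τ : ℂ} (hτ : 0 < τ.im) (r : ℕ) :
    HasW (fun z => (z.im : ℂ)⁻¹ ^ r) (-(r : ℂ) * (τ.im : ℂ)⁻¹ ^ (r + 1)) τ := by
  induction r with
  | zero => simpa using HasW.const 1 τ
  | succ r ih =>
    have := ih.mul (HasW.im_inv hτ)
    simp only [pow_succ]
    convert this using 1
    push_cast
    ring

/-- The integral of `t^p (t+2v)^q` built recursively from the moments `J p`. -/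
def PP (J : ℕ → ℂ → ℂ) : ℕ → ℕ → ℂ → ℂ
  | p, 0 => J p
  | p, q + 1 => fun τ => PP J (p + 1) q τ + 2 * (τ.im : ℂ) * PP J p q τ

lemma PP_succ (J : ℕ → ℂ → ℂ) (p q : ℕ) (τ : ℂ) :
    PP J p (q + 1) τ = PP J (p + 1) q τ + 2 * (τ.im : ℂ) * PP J p q τ := rfl

lemma PP_zero (J : ℕ → ℂ → ℂ) (p : ℕ) : PP J p 0 = J p := rfl

lemma PP_conj (J : ℕ → ℂ → ℂ) (p q : ℕ) (τ : ℂ) :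
    PP (fun n z => starRingEnd ℂ (J n z)) p q τ = starRingEnd ℂ (PP J p q τ) := by
  induction q generalizing p with
  | zero => rfl
  | succ q ih => simp [PP_succ, ih, Complex.conj_ofNat]

lemma HasW.PP_hol {J : ℕ → ℂ → ℂ} {τ : ℂ}
    (hJ : ∀ p, HasW (J (p + 1)) (-2 * ((p : ℂ) + 1) * J p τ) τ) (q p : ℕ) :
    HasW (PP J (p + 1) q) (-2 * ((p : ℂ) + 1) * PP J p q τ) τ := by
  induction q generalizing p with
  | zero => exact hJ p
  | succ q ih =>
    have := (ih (p + 1)).add (((HasW.im τ).const_mul 2).mul (ih p))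
    change HasW (fun τ => PP J (p + 1 + 1) q τ + 2 * (τ.im : ℂ) * PP J (p + 1) q τ) _ τ
    convert this using 1
    rw [PP_succ]
    push_cast
    ring

lemma HasW.PP_anti {J : ℕ → ℂ → ℂ} {τ : ℂ}
    (hJ : ∀ p, HasW (J p) 0 τ) (q p : ℕ) :
    HasW (PP J p (q + 1)) (2 * ((q : ℂ) + 1) * PP J p q τ) τ := by
  induction q generalizing p with
  | zero =>
    have := (hJ (p + 1)).add (((HasW.im τ).const_mul 2).mul (hJ p))
    change HasW (fun τ => J (p + 1) τ + 2 * (τ.im : ℂ) * J p τ) _ τ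
    convert this using 1
    rw [PP_zero]
    push_cast
    ring
  | succ q ih =>
    have := (ih (p + 1)).add (((HasW.im τ).const_mul 2).mul (ih p))
    change HasW (fun τ => PP J (p + 1) (q + 1) τ + 2 * (τ.im : ℂ) * PP J p (q + 1) τ) _ τ
    convert this using 1
    rw [PP_succ]
    push_cast
    ring

lemma HasW.raiseOp {g : ℂ → ℂ} {d τ : ℂ} (h : HasW g d τ) (κ : ℤ) :
    raiseOp κ g τ = d + (κ : ℂ) * (τ.im : ℂ)⁻¹ * g τ := by
  rw [LHMF.raiseOp, h.2]

lemma upper_mem_nhds {τ : ℂ} (hτ : 0 < τ.im) : {z : ℂ | 0 < z.im} ∈ nhds τ :=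
  (isOpen_lt continuous_const Complex.continuous_im).mem_nhds hτ

lemma raiseIter_hol {J : ℕ → ℂ → ℂ}
    (hJ : ∀ τ : ℂ, 0 < τ.im → ∀ p, HasW (J (p + 1)) (-2 * ((p : ℂ) + 1) * J p τ) τ)
    (g : ℂ → ℂ) (c : ℂ) (n : ℕ) (hg : ∀ τ : ℂ, 0 < τ.im → g τ = c * J n τ) (r : ℕ) :
    ∀ p, p + r = n → ∀ τ : ℂ, 0 < τ.im → raiseIter (-(n : ℤ)) r g τ =
      (c * (-1) ^ r * (n.descFactorial r : ℂ)) * ((τ.im : ℂ)⁻¹ ^ r * PP J p r τ) := by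
  induction r with
  | zero =>
    intro p hp τ hτ
    obtain rfl : p = n := by simpa using hp
    simp [raiseIter, hg τ hτ, PP_zero]
  | succ r ih =>
    intro p hp τ hτ
    have hv : (τ.im : ℂ) ≠ 0 := by exact_mod_cast hτ.ne'
    have ih' := ih (p + 1) (by omega)
    have hW := ((((HasW.im_inv_pow hτ r).mul
      (HasW.PP_hol (hJ τ hτ) r p)).const_mul
        (c * (-1) ^ r * (n.descFactorial r : ℂ))).congr
        (Filter.mem_of_superset (upper_mem_nhds hτ) (fun z hz => ih' z hz)))
    change LHMF.raiseOp (-(n : ℤ) + 2 * r) (raiseIter (-(n : ℤ)) r g) τ = _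
    rw [hW.raiseOp, ih' τ hτ, Nat.descFactorial_succ, PP_succ,
      show n - r = p + 1 by omega, show (n : ℤ) = p + r + 1 by omega]
    push_cast
    have hw := mul_inv_cancel₀ hv
    generalize (τ.im : ℂ)⁻¹ = w at hw ⊢
    linear_combination (c * (-1) ^ r * (n.descFactorial r : ℂ) * w ^ r * 2 * ((p : ℂ) + 1) *
      PP J p r τ) * hw

lemma raiseIter_anti {J : ℕ → ℂ → ℂ}
    (hJ : ∀ τ : ℂ, 0 < τ.im → ∀ p, HasW (J p) 0 τ)
    (g : ℂ → ℂ) (c : ℂ) (n : ℕ) (hg : ∀ τ : ℂ, 0 < τ.im → g τ = c * PP J 0 n τ) (r : ℕ) :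
    ∀ p, p + r = n → ∀ τ : ℂ, 0 < τ.im → raiseIter (-(n : ℤ)) r g τ =
      (c * (-1) ^ r * (n.descFactorial r : ℂ)) * ((τ.im : ℂ)⁻¹ ^ r * PP J r p τ) := by
  induction r with
  | zero =>
    intro p hp τ hτ
    obtain rfl : p = n := by simpa using hp
    simp [raiseIter, hg τ hτ]
  | succ r ih =>
    intro p hp τ hτ
    have hv : (τ.im : ℂ) ≠ 0 := by exact_mod_cast hτ.ne'
    have ih' := ih (p + 1) (by omega)
    have hW := ((((HasW.im_inv_pow hτ r).mul
      (HasW.PP_anti (hJ τ hτ) p r)).const_mul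
        (c * (-1) ^ r * (n.descFactorial r : ℂ))).congr
        (Filter.mem_of_superset (upper_mem_nhds hτ) (fun z hz => ih' z hz)))
    change LHMF.raiseOp (-(n : ℤ) + 2 * r) (raiseIter (-(n : ℤ)) r g) τ = _
    rw [hW.raiseOp, ih' τ hτ, Nat.descFactorial_succ, PP_succ,
      show n - r = p + 1 by omega, show (n : ℤ) = p + r + 1 by omega]
    push_cast
    have hw := mul_inv_cancel₀ hv
    generalize (τ.im : ℂ)⁻¹ = w at hw ⊢
    linear_combination (-c * (-1) ^ r * (n.descFactorial r : ℂ) * w ^ r * 2 * ((p : ℂ) + 1) *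
      PP J r p τ) * hw

/-- Exponential decay along vertical translates, uniformly near `τ`. -/
lemma decay {k : ℕ} {f : ℂ → ℂ} (hf : IsCuspForm2k k f) {τ : ℂ} (hτ : 0 < τ.im) :
    ∃ C : ℝ, 0 ≤ C ∧ ∀ z ∈ Metric.closedBall τ (3 * τ.im / 4), ∀ t : ℝ, 0 ≤ t →
      ‖f (z + t * Complex.I)‖ ≤ C * Real.exp (-t) := by
  obtain ⟨hd, hm, h0⟩ := hf
  have himz : ∀ z ∈ Metric.closedBall τ (3 * τ.im / 4), τ.im / 4 ≤ z.im := by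
    intro z hz
    have h1 := Complex.abs_im_le_norm (z - τ)
    rw [mem_closedBall_iff_norm] at hz
    have := (abs_le.1 (h1.trans hz)).1
    rw [Complex.sub_im] at this
    linarith
  set g : ℂ → ℂ := fun z => if 0 < z.im then f z else 0 with hgdef
  have hev : ∀ᶠ z in Filter.comap Complex.im Filter.atTop, 0 < z.im :=
    Filter.tendsto_comap.eventually (Filter.eventually_gt_atTop 0)
  have hgf : ∀ z : ℂ, 0 < z.im → g z = f z := fun z hz => by simp [hgdef, hz]
  have hper : Function.Periodic g ((1 : ℝ) : ℂ) := by
    intro z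
    by_cases hz : 0 < z.im
    · rw [hgf z hz, hgf _ (by simpa using hz)]
      have := hm ModularGroup.T z hz
      simpa [moeb, jfac, ModularGroup.coe_T] using this
    · simp [hgdef, hz]
  have hhol : ∀ᶠ z in Filter.comap Complex.im Filter.atTop, DifferentiableAt ℂ g z := by
    filter_upwards [hev] with z hz
    exact (hd z hz).congr_of_eventuallyEq
      (Filter.mem_of_superset (upper_mem_nhds hz) (fun w hw => hgf w hw))
  have hg0 : Filter.Tendsto g (Filter.comap Complex.im Filter.atTop) (nhds 0) := by
    refine h0.congr' ?_
    filter_upwards [hev] with z hz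
    exact (hgf z hz).symm
  have hO := Function.Periodic.exp_decay_of_zero_at_inf one_pos hper hhol hg0
  obtain ⟨c, hc⟩ := hO.bound
  rw [Filter.eventually_comap, Filter.eventually_atTop] at hc
  obtain ⟨Y, hY⟩ := hc
  set T : ℝ := max Y 0
  have hKc : IsCompact ((fun x : ℂ × ℝ => x.1 + x.2 * Complex.I) ''
      (Metric.closedBall τ (3 * τ.im / 4) ×ˢ Set.Icc (0 : ℝ) T)) := by
    refine ((isCompact_closedBall _ _).prod isCompact_Icc).image ?_
    fun_prop
  have hcont : ContinuousOn f ((fun x : ℂ × ℝ => x.1 + x.2 * Complex.I) ''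
      (Metric.closedBall τ (3 * τ.im / 4) ×ˢ Set.Icc (0 : ℝ) T)) := by
    rintro _ ⟨⟨z, t⟩, ⟨hz, ht⟩, rfl⟩
    refine (hd _ ?_).continuousAt.continuousWithinAt
    have := himz z hz
    have := ht.1
    simp
    linarith
  obtain ⟨B, hB⟩ := hKc.exists_bound_of_continuousOn hcont
  refine ⟨max c 0 + max B 0 * Real.exp T, by positivity, ?_⟩
  intro z hz t ht
  have hzi := himz z hz
  have him : (z + t * Complex.I).im = z.im + t := by simp
  by_cases htT : t ≤ T
  · have h1 := hB (z + t * Complex.I) ⟨(z, t), ⟨hz, ht, htT⟩, rfl⟩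
    have h2 : 1 ≤ Real.exp T * Real.exp (-t) := by
      rw [← Real.exp_add]
      exact Real.one_le_exp (by linarith)
    calc ‖f (z + t * Complex.I)‖ ≤ max B 0 := h1.trans (le_max_left _ _)
      _ ≤ max B 0 * (Real.exp T * Real.exp (-t)) := le_mul_of_one_le_right (le_max_right _ _) h2
      _ ≤ _ := by
        have : 0 ≤ max c 0 * Real.exp (-t) := by positivity
        nlinarith
  · push Not at htT
    have hY' : Y ≤ z.im + t := by linarith [le_max_left Y 0]
    have h1 := hY _ hY' (z + t * Complex.I) him
    rw [hgf _ (by rw [him]; linarith), him, Real.norm_of_nonneg (Real.exp_pos _).le] at h1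
    have h2 : Real.exp (-2 * π * (z.im + t) / 1) ≤ Real.exp (-t) := by
      apply Real.exp_le_exp.2
      have := Real.pi_gt_three
      nlinarith
    calc _ ≤ _ := h1
      _ ≤ max c 0 * Real.exp (-2 * π * (z.im + t) / 1) := by
        gcongr; exact le_max_left _ _
      _ ≤ max c 0 * Real.exp (-t) := by gcongr
      _ ≤ _ := by
        have : 0 ≤ max B 0 * Real.exp T * Real.exp (-t) := by positivity
        nlinarith

lemma decay_deriv {k : ℕ} {f : ℂ → ℂ} (hf : IsCuspForm2k k f) {τ : ℂ} (hτ : 0 < τ.im) :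
    ∃ C : ℝ, 0 ≤ C ∧ ∀ z ∈ Metric.ball τ (τ.im / 2), ∀ t : ℝ, 0 ≤ t →
      ‖deriv f (z + t * Complex.I)‖ ≤ C * Real.exp (-t) := by
  obtain ⟨C, hC0, hC⟩ := decay hf hτ
  refine ⟨C / (τ.im / 4), by positivity, ?_⟩
  intro z hz t ht
  have key : ∀ w ∈ Metric.closedBall (z + t * Complex.I) (τ.im / 4),
      w - t * Complex.I ∈ Metric.closedBall τ (3 * τ.im / 4) := by
    intro w hw
    rw [mem_closedBall_iff_norm] at hw ⊢
    rw [mem_ball_iff_norm] at hz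
    calc ‖w - t * Complex.I - τ‖ = ‖(w - (z + t * Complex.I)) + (z - τ)‖ := by ring_nf
      _ ≤ _ := norm_add_le _ _
      _ ≤ _ := by linarith
  rw [div_mul_eq_mul_div]
  refine Complex.norm_deriv_le_of_forall_mem_sphere_norm_le (by positivity) ?_ ?_
  · refine DifferentiableOn.diffContOnCl_ball (U := Metric.closedBall (z + t * Complex.I) (τ.im / 4)) ?_ subset_rfl
    intro w hw
    refine (hf.1 w ?_).differentiableWithinAt
    have h1 := Complex.abs_im_le_norm (w - t * Complex.I - τ)
    have h2 := key w hw
    rw [mem_closedBall_iff_norm] at h2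
    have := (abs_le.1 (h1.trans h2)).1
    simp at this
    linarith
  · intro w hw
    have := hC _ (key w (Metric.sphere_subset_closedBall hw)) t ht
    simpa using this

lemma integrable_bound (C : ℝ) (j : ℕ) :
    IntegrableOn (fun t : ℝ => C * Real.exp (-t) * t ^ j) (Set.Ioi 0) := by
  have h := (Real.GammaIntegral_convergent (s := (j : ℝ) + 1) (by positivity)).const_mul C
  refine h.congr ?_
  filter_upwards [ae_restrict_mem measurableSet_Ioi] with t ht
  simp [mul_assoc]

lemma im_pos_add {τ : ℂ} (hτ : 0 < τ.im) {t : ℝ} (ht : 0 ≤ t) : 0 < (τ + t * Complex.I).im := by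
  simp
  linarith

lemma meas_of_cont {h : ℂ → ℂ} (hh : ∀ τ : ℂ, 0 < τ.im → ContinuousAt h τ) {τ : ℂ}
    (hτ : 0 < τ.im) (j : ℕ) :
    AEStronglyMeasurable (fun t : ℝ => h (τ + t * Complex.I) * (t : ℂ) ^ j)
      (volume.restrict (Set.Ioi 0)) := by
  refine ContinuousOn.aestronglyMeasurable ?_ measurableSet_Ioi
  intro t ht
  refine ContinuousAt.continuousWithinAt ?_
  refine ContinuousAt.mul ?_ (by fun_prop)
  refine ContinuousAt.comp (f := fun t : ℝ => τ + t * Complex.I) ?_ (by fun_prop)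
  exact hh _ (im_pos_add hτ (le_of_lt ht))

/-- Moments of `f` along the vertical ray. -/
def mom (f : ℂ → ℂ) (j : ℕ) (τ : ℂ) : ℂ :=
  ∫ t in Set.Ioi (0 : ℝ), f (τ + (t : ℂ) * Complex.I) * (t : ℂ) ^ j

lemma integrable_of_bound {h : ℂ → ℂ} (hh : ∀ τ : ℂ, 0 < τ.im → ContinuousAt h τ) {τ : ℂ}
    (hτ : 0 < τ.im) {C : ℝ} (hC : ∀ t : ℝ, 0 ≤ t → ‖h (τ + t * Complex.I)‖ ≤ C * Real.exp (-t))
    (j : ℕ) :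
    IntegrableOn (fun t : ℝ => h (τ + t * Complex.I) * (t : ℂ) ^ j) (Set.Ioi 0) := by
  refine Integrable.mono' (integrable_bound C j) (meas_of_cont hh hτ j) ?_
  filter_upwards [ae_restrict_mem measurableSet_Ioi] with t ht
  have ht' : 0 ≤ t := le_of_lt ht
  rw [norm_mul, norm_pow, Complex.norm_real, Real.norm_of_nonneg ht']
  exact mul_le_mul_of_nonneg_right (hC t ht') (by positivity)

lemma cont_of_cusp {k : ℕ} {f : ℂ → ℂ} (hf : IsCuspForm2k k f) (τ : ℂ) (hτ : 0 < τ.im) :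
    ContinuousAt f τ := (hf.1 τ hτ).continuousAt

lemma cont_deriv_of_cusp {k : ℕ} {f : ℂ → ℂ} (hf : IsCuspForm2k k f) (τ : ℂ) (hτ : 0 < τ.im) :
    ContinuousAt (deriv f) τ := by
  have h : DifferentiableOn ℂ f {z : ℂ | 0 < z.im} :=
    fun z hz => (hf.1 z hz).differentiableWithinAt
  have h2 := h.deriv (isOpen_lt continuous_const Complex.continuous_im)
  exact (h2.continuousOn).continuousAt (upper_mem_nhds hτ)

lemma integrable_mom {k : ℕ} {f : ℂ → ℂ} (hf : IsCuspForm2k k f) {τ : ℂ} (hτ : 0 < τ.im)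
    (j : ℕ) :
    IntegrableOn (fun t : ℝ => f (τ + t * Complex.I) * (t : ℂ) ^ j) (Set.Ioi 0) := by
  obtain ⟨C, -, hC⟩ := decay hf hτ
  exact integrable_of_bound (cont_of_cusp hf) hτ
    (fun t ht => hC τ (Metric.mem_closedBall_self (by positivity)) t ht) j

lemma hasDerivAt_mom {k : ℕ} {f : ℂ → ℂ} (hf : IsCuspForm2k k f) {τ : ℂ} (hτ : 0 < τ.im)
    (j : ℕ) :
    IntegrableOn (fun t : ℝ => deriv f (τ + t * Complex.I) * (t : ℂ) ^ j) (Set.Ioi 0) ∧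
    HasDerivAt (mom f j)
      (∫ t in Set.Ioi (0 : ℝ), deriv f (τ + (t : ℂ) * Complex.I) * (t : ℂ) ^ j) τ := by
  obtain ⟨C, -, hC⟩ := decay_deriv hf hτ
  have hball : ∀ z ∈ Metric.ball τ (τ.im / 2), 0 < z.im := by
    intro z hz
    have h1 := Complex.abs_im_le_norm (z - τ)
    rw [mem_ball_iff_norm] at hz
    have := (abs_lt.1 (h1.trans_lt hz)).1
    rw [Complex.sub_im] at this
    linarith
  refine hasDerivAt_integral_of_dominated_loc_of_deriv_le
    (F := fun z (t : ℝ) => f (z + (t : ℂ) * Complex.I) * (t : ℂ) ^ j)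
    (F' := fun z (t : ℝ) => deriv f (z + (t : ℂ) * Complex.I) * (t : ℂ) ^ j)
    (bound := fun t : ℝ => C * Real.exp (-t) * t ^ j)
    (Metric.ball_mem_nhds τ (half_pos hτ)) ?_ (integrable_mom hf hτ j)
    (meas_of_cont (cont_deriv_of_cusp hf) hτ j) ?_ (integrable_bound C j) ?_
  · filter_upwards [upper_mem_nhds hτ] with z hz
    exact meas_of_cont (cont_of_cusp hf) hz j
  · filter_upwards [ae_restrict_mem measurableSet_Ioi] with t ht z hz
    have ht' : 0 ≤ t := le_of_lt ht
    rw [norm_mul, norm_pow, Complex.norm_real, Real.norm_of_nonneg ht']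
    exact mul_le_mul_of_nonneg_right (hC z hz t ht') (by positivity)
  · filter_upwards [ae_restrict_mem measurableSet_Ioi] with t ht z hz
    have h := (hf.1 _ (im_pos_add (hball z hz) (le_of_lt ht))).hasDerivAt
    exact (HasDerivAt.comp_add_const z ((t : ℂ) * Complex.I) h).mul_const _

lemma mom_deriv_eq {k : ℕ} {f : ℂ → ℂ} (hf : IsCuspForm2k k f) {τ : ℂ} (hτ : 0 < τ.im)
    (j : ℕ) :
    ∫ t in Set.Ioi (0 : ℝ), deriv f (τ + (t : ℂ) * Complex.I) * (t : ℂ) ^ (j + 1) =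
      Complex.I * ((j : ℂ) + 1) * mom f j τ := by
  have hI1 := (hasDerivAt_mom hf hτ (j + 1)).1
  have hI0 := integrable_mom hf hτ j
  have hder : ∀ t ∈ Set.Ici (0 : ℝ), HasDerivAt
      (fun t : ℝ => f (τ + (t : ℂ) * Complex.I) * (t : ℂ) ^ (j + 1))
      (Complex.I * (deriv f (τ + (t : ℂ) * Complex.I) * (t : ℂ) ^ (j + 1)) +
        ((j : ℂ) + 1) * (f (τ + (t : ℂ) * Complex.I) * (t : ℂ) ^ j)) t := by
    intro t ht
    have h := (hf.1 _ (im_pos_add hτ ht)).hasDerivAt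
    have hl : HasDerivAt (fun t : ℝ => τ + (t : ℂ) * Complex.I) Complex.I t := by
      simpa using ((Complex.ofRealCLM.hasDerivAt (x := t)).mul_const Complex.I).const_add τ
    have h1 : HasDerivAt (fun t : ℝ => f (τ + (t : ℂ) * Complex.I))
        (deriv f (τ + (t : ℂ) * Complex.I) * Complex.I) t := HasDerivAt.comp t h hl
    have h2 : HasDerivAt (fun t : ℝ => (t : ℂ) ^ (j + 1)) (((j : ℂ) + 1) * (t : ℂ) ^ j) t := by
      simpa using (hasDerivAt_pow (j + 1) (t : ℂ)).comp_ofReal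
    refine (h1.fun_mul h2).congr_deriv ?_
    ring
  have hint := (hI1.const_mul Complex.I).add (hI0.const_mul ((j : ℂ) + 1))
  have hlim : Filter.Tendsto (fun t : ℝ => f (τ + (t : ℂ) * Complex.I) * (t : ℂ) ^ (j + 1))
      Filter.atTop (nhds 0) := by
    obtain ⟨C, -, hC⟩ := decay hf hτ
    have h0 : Filter.Tendsto (fun t : ℝ => C * (t ^ (j + 1) * Real.exp (-t)))
        Filter.atTop (nhds 0) := by
      simpa using (Real.tendsto_pow_mul_exp_neg_atTop_nhds_zero (j + 1)).const_mul C
    refine squeeze_zero_norm' ?_ h0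
    filter_upwards [Filter.eventually_ge_atTop 0] with t ht
    rw [norm_mul, norm_pow, Complex.norm_real, Real.norm_of_nonneg ht]
    have := mul_le_mul_of_nonneg_right
      (hC τ (Metric.mem_closedBall_self (by positivity)) t ht) (pow_nonneg ht (j + 1))
    linarith
  have key := integral_Ioi_of_hasDerivAt_of_tendsto' hder hint hlim
  rw [integral_add (hI1.const_mul Complex.I) (hI0.const_mul ((j : ℂ) + 1)),
    integral_const_mul, integral_const_mul] at key
  change Complex.I * _ + ((j : ℂ) + 1) * mom f j τ = _ at key
  simp only [Complex.ofReal_zero, zero_pow (Nat.succ_ne_zero j), mul_zero, sub_zero] at key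
  linear_combination (-Complex.I) * key +
    (∫ t in Set.Ioi (0 : ℝ), deriv f (τ + (t : ℂ) * Complex.I) * (t : ℂ) ^ (j + 1)) * Complex.I_sq

lemma PP_mom {k : ℕ} {f : ℂ → ℂ} (hf : IsCuspForm2k k f) {τ : ℂ} (hτ : 0 < τ.im) (q p : ℕ) :
    IntegrableOn (fun t : ℝ => f (τ + t * Complex.I) *
      ((t : ℂ) ^ p * ((t : ℂ) + 2 * τ.im) ^ q)) (Set.Ioi 0) ∧
    PP (mom f) p q τ = ∫ t in Set.Ioi (0 : ℝ), f (τ + t * Complex.I) *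
      ((t : ℂ) ^ p * ((t : ℂ) + 2 * τ.im) ^ q) := by
  induction q generalizing p with
  | zero => exact ⟨by simpa using integrable_mom hf hτ p, by simp [PP_zero, mom]⟩
  | succ q ih =>
    obtain ⟨h1, e1⟩ := ih (p + 1)
    obtain ⟨h2, e2⟩ := ih p
    have e : (fun t : ℝ => f (τ + t * Complex.I) *
      ((t : ℂ) ^ p * ((t : ℂ) + 2 * τ.im) ^ (q + 1))) = fun t : ℝ => f (τ + t * Complex.I) *
      ((t : ℂ) ^ (p + 1) * ((t : ℂ) + 2 * τ.im) ^ q) + 2 * (τ.im : ℂ) * (f (τ + t * Complex.I) *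
      ((t : ℂ) ^ p * ((t : ℂ) + 2 * τ.im) ^ q)) := by
      funext t
      ring
    rw [e, PP_succ, e1, e2]
    refine ⟨h1.add (h2.const_mul _), ?_⟩
    rw [integral_add h1 (h2.const_mul _), integral_const_mul]

/-- relation between the raised non-holomorphic and holomorphic Eichler integrals
of a cusp form of weight `2k`. -/
theorem raised_eichler_relation (k : ℕ) (hk : 2 ≤ k) (f : ℂ → ℂ) (hf : IsCuspForm2k k f)
    (τ : ℂ) (hτ : 0 < τ.im) :
    raiseIter (2 - 2 * k) (k - 1) (eichlerStar k f) τ =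
      -((Nat.factorial (2 * k - 2) : ℂ) / (4 * (π : ℂ)) ^ (2 * k - 1)) *
        starRingEnd ℂ (raiseIter (2 - 2 * k) (k - 1) (eichlerHol k f) τ) := by

  obtain ⟨m, rfl⟩ : ∃ m, k = m + 1 := ⟨k - 1, by omega⟩
  have hmom : ∀ τ : ℂ, 0 < τ.im → ∀ p, HasW (mom f (p + 1))
      (-2 * ((p : ℂ) + 1) * mom f p τ) τ := by
    intro τ hτ p
    have h := HasW.of_hasDerivAt (hasDerivAt_mom hf hτ (p + 1)).2
    rw [mom_deriv_eq hf hτ p] at h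
    convert h using 1
    linear_combination (-2 * ((p : ℂ) + 1) * mom f p τ) * Complex.I_sq
  have hconj : ∀ τ : ℂ, 0 < τ.im → ∀ p, HasW (fun z => starRingEnd ℂ (mom f p z)) 0 τ :=
    fun τ hτ p => HasW.conj_of_hasDerivAt (hasDerivAt_mom hf hτ p).2
  have e1 : 2 * (m + 1) - 2 = 2 * m := by omega
  have e2 : 2 * (m + 1) - 1 = 2 * m + 1 := by omega
  have hE : ∀ τ : ℂ, 0 < τ.im → eichlerHol (m + 1) f τ =
      ((-2 * (π : ℂ) * Complex.I) ^ (2 * m + 1) / (Nat.factorial (2 * m) : ℂ) *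
        Complex.I ^ (2 * m + 1)) * mom f (2 * m) τ := by
    intro τ hτ
    unfold eichlerHol mom
    rw [e1, e2, mul_assoc (_ / _)]
    congr 1
    rw [← integral_const_mul]
    congr 1
    funext t
    ring
  have hS : ∀ τ : ℂ, 0 < τ.im → eichlerStar (m + 1) f τ =
      ((-2 * Complex.I) ^ (1 - 2 * ((m + 1 : ℕ) : ℤ)) * Complex.I ^ (2 * m + 1)) *
        PP (fun n z => starRingEnd ℂ (mom f n z)) 0 (2 * m) τ := by
    intro τ hτ
    rw [PP_conj, (PP_mom hf hτ (2 * m) 0).2, ← integral_conj]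
    unfold eichlerStar
    rw [e1, mul_assoc]
    congr 1
    rw [← integral_const_mul]
    congr 1
    funext t
    have h1 : -(starRingEnd ℂ (-(starRingEnd ℂ τ) + (t : ℂ) * Complex.I)) =
        τ + t * Complex.I := by
      simp
      ring
    have h2 : -(starRingEnd ℂ τ) + (t : ℂ) * Complex.I + τ =
        Complex.I * ((t : ℂ) + 2 * τ.im) := by
      apply Complex.ext <;> simp
      ring
    rw [h1, h2, mul_pow]
    simp only [map_mul, map_pow, map_add, Complex.conj_ofReal, pow_zero, one_mul,
      Complex.conj_ofNat]
    ring
  have ew : (2 - 2 * ((m + 1 : ℕ) : ℤ)) = -((2 * m : ℕ) : ℤ) := by push_cast; ring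
  rw [show m + 1 - 1 = m by omega, ew, e1, e2,
    raiseIter_hol hmom _ _ (2 * m) hE m m (by omega) τ hτ,
    raiseIter_anti hconj _ _ (2 * m) hS m m (by omega) τ hτ, PP_conj]
  have ez : (1 - 2 * ((m + 1 : ℕ) : ℤ)) = -((2 * m + 1 : ℕ) : ℤ) := by push_cast; ring
  have hpi : (π : ℂ) ≠ 0 := by exact_mod_cast Real.pi_ne_zero
  have hfac : (Nat.factorial (2 * m) : ℂ) ≠ 0 := by exact_mod_cast Nat.factorial_ne_zero _
  have hc1 : (-2 * Complex.I) ^ (1 - 2 * ((m + 1 : ℕ) : ℤ)) * Complex.I ^ (2 * m + 1) =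
      -(1 / 2) ^ (2 * m + 1) := by
    rw [ez, zpow_neg, zpow_natCast, ← inv_pow, ← mul_pow,
      show (-2 * Complex.I)⁻¹ * Complex.I = -(1 / 2) by field_simp, Odd.neg_pow ⟨m, rfl⟩]
  have hc2 : (-2 * (π : ℂ) * Complex.I) ^ (2 * m + 1) / (Nat.factorial (2 * m) : ℂ) *
        Complex.I ^ (2 * m + 1) = (2 * (π : ℂ)) ^ (2 * m + 1) / (Nat.factorial (2 * m) : ℂ) := by
    rw [div_mul_eq_mul_div, ← mul_pow]
    congr 2
    linear_combination (-2 * (π : ℂ)) * Complex.I_sq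
  rw [hc1, hc2]
  simp only [map_mul, map_pow, map_div₀, map_inv₀, map_neg, map_one, Complex.conj_ofReal,
    map_natCast, Complex.conj_ofNat]
  have hc3 : (1 / 2 : ℂ) ^ (2 * m + 1) = (Nat.factorial (2 * m) : ℂ) /
      (4 * (π : ℂ)) ^ (2 * m + 1) * ((2 * (π : ℂ)) ^ (2 * m + 1) /
        (Nat.factorial (2 * m) : ℂ)) := by
    rw [div_mul_div_comm, mul_comm (Nat.factorial (2 * m) : ℂ), mul_div_mul_right _ _ hfac, ← div_pow]
    congr 1
    field_simp
    norm_num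
  rw [hc3]
  ring

end LHMF
end
end

section
/- Let k ≥ 2 and 0 < n < 2k−2 be integers. The local polynomial P_{1−k,n} is invariant under the weight 2−2k action of T = (1,1;0,1); that is, for every τ ∈ ℍ∖E₁ one has P_{1−k,n}(τ+1) = P_{1−k,n}(τ) (note τ+1 ∈ ℍ∖E₁ as well, since E₁ is SL₂(ℤ)-invariant). -/
open Complex MeasureTheory
open scoped Real

noncomputable section

namespace LHMF

/-- The translation matrix `T = (1,1;0,1)`. -/
def Tmat : SL2Z := ⟨!![1, 1; 0, 1], by simp [Matrix.det_fin_two]⟩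

lemma mulT_entries (M : SL2Z) :
    (M * Tmat).1 0 0 = M.1 0 0 ∧ (M * Tmat).1 0 1 = M.1 0 0 + M.1 0 1 ∧
    (M * Tmat).1 1 0 = M.1 1 0 ∧ (M * Tmat).1 1 1 = M.1 1 0 + M.1 1 1 := by
  have h : (M * Tmat).1 = M.1 * !![1, 1; 0, 1] := rfl
  rw [h]
  simp [Matrix.mul_apply, Fin.sum_univ_two]

lemma jfac_mulT (M : SL2Z) (τ : ℂ) : jfac (M * Tmat) τ = jfac M (τ + 1) := by
  obtain ⟨_, _, h3, h4⟩ := mulT_entries M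
  unfold jfac
  rw [h3, h4]
  push_cast
  ring

lemma moeb_mulT (M : SL2Z) (τ : ℂ) : moeb (M * Tmat) τ = moeb M (τ + 1) := by
  obtain ⟨h1, h2, h3, h4⟩ := mulT_entries M
  unfold moeb
  rw [h1, h2, h3, h4]
  push_cast
  congr 1 <;> ring

lemma bernPer_add_one (m : ℕ) (τ : ℂ) : bernPer m (τ + 1) = bernPer m τ := by
  unfold bernPer
  congr 1
  rw [Complex.add_re, Complex.one_re, Int.floor_add_one]
  push_cast
  ring

/-- the local polynomial `P_{1-k,n}` is invariant under `τ ↦ τ + 1`. -/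
theorem Ppoly_T_invariant (k n : ℕ) (hk : 2 ≤ k) (hn0 : 0 < n) (hn1 : n < 2 * k - 2)
    (τ : ℂ) (hτ : 0 < τ.im) (hτE : τ ∉ E1) :
    Ppoly k n (τ + 1) = Ppoly k n τ := by
  unfold Ppoly
  rw [bernPer_add_one, bernPer_add_one]
  congr 2
  let e : {M : SL2Z // 0 < M.1 0 0 * M.1 1 0 ∧ (moeb M (τ + 1)).re < 0} ≃
      {M : SL2Z // 0 < M.1 0 0 * M.1 1 0 ∧ (moeb M τ).re < 0} :=
    (Equiv.mulRight Tmat).subtypeEquiv (fun M => by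
      obtain ⟨h1, _, h3, _⟩ := mulT_entries M
      rw [Equiv.coe_mulRight, h1, h3, moeb_mulT])
  rw [← e.tsum_eq]
  refine tsum_congr fun M => ?_
  have he : (e M).1 = M.1 * Tmat := rfl
  rw [he, jfac_mulT, moeb_mulT]

end LHMF
end
end

section
/- Let k ≥ 2 and 0 < n < 2k−2 be integers and let P be a positive definite integral binary quadratic form of discriminant d < 0 whose CM point τ_P satisfies Re(Mτ_P) ≠ 0 for all M ∈ SL₂(ℤ). Then |d|^{(k−1)/2} · (R_{2−2k}^{k−1} P_{1−k,n})(τ_P) is a rational number if n is odd, and lies in iℚ if n is even. -/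
open Complex MeasureTheory
open scoped Real

noncomputable section

namespace LHMF

lemma dtau_of_hasFDerivAt {f : ℂ → ℂ} {f' : ℂ →L[ℝ] ℂ} {τ : ℂ} (h : HasFDerivAt f f' τ) :
    dtau f τ = (f' 1 - Complex.I * f' Complex.I) / 2 := by
  rw [dtau, h.fderiv]

lemma dtau_mul' {f g : ℂ → ℂ} {τ : ℂ} (hf : DifferentiableAt ℝ f τ) (hg : DifferentiableAt ℝ g τ) :
    dtau (fun z => f z * g z) τ = dtau f τ * g τ + f τ * dtau g τ := by
  rw [dtau_of_hasFDerivAt (f := fun z => f z * g z) (hf.hasFDerivAt.mul hg.hasFDerivAt)]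
  simp [dtau]
  ring

lemma dtau_pow' {f : ℂ → ℂ} {τ : ℂ} (hf : DifferentiableAt ℝ f τ) (m : ℕ) :
    dtau (fun z => f z ^ m) τ = m * f τ ^ (m - 1) * dtau f τ := by
  rw [dtau_of_hasFDerivAt (f := fun z => f z ^ m) (hf.hasFDerivAt.pow m)]
  simp [dtau]
  ring

lemma dtau_sub_const (x τ : ℂ) : dtau (fun z => z - x) τ = 1 := by
  rw [dtau_of_hasFDerivAt (f := fun z => z - x) ((hasFDerivAt_id (𝕜 := ℝ) τ).sub_const x)]
  simp

lemma dtau_conj_sub_const (x τ : ℂ) : dtau (fun z => starRingEnd ℂ z - x) τ = 0 := by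
  have h : HasFDerivAt (fun z : ℂ => starRingEnd ℂ z - x) (Complex.conjCLE : ℂ →L[ℝ] ℂ) τ :=
    (Complex.conjCLE.hasFDerivAt (x := τ)).sub_const x
  rw [dtau_of_hasFDerivAt h]
  simp

lemma hasFDerivAt_iminv {τ : ℂ} (h : 0 < τ.im) :
    HasFDerivAt (fun z : ℂ => ((z.im : ℂ))⁻¹)
      (-((τ.im : ℂ) ^ 2)⁻¹ • (Complex.ofRealCLM.comp Complex.imCLM)) τ := by
  have h1 : HasFDerivAt (fun z : ℂ => (z.im : ℂ)) (Complex.ofRealCLM.comp Complex.imCLM) τ :=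
    (Complex.ofRealCLM.comp Complex.imCLM).hasFDerivAt
  have h0 : (τ.im : ℂ) ≠ 0 := by exact_mod_cast h.ne'
  have h2 := ((hasDerivAt_inv h0).hasFDerivAt.restrictScalars ℝ).comp τ h1
  refine h2.congr_fderiv ?_
  ext
  · simp
    try ring

lemma dtau_iminv {τ : ℂ} (h : 0 < τ.im) :
    dtau (fun z => ((z.im : ℂ))⁻¹) τ = Complex.I / 2 * ((τ.im : ℂ) ^ 2)⁻¹ := by
  rw [dtau_of_hasFDerivAt (hasFDerivAt_iminv h)]
  simp
  ring

/-- upper half plane -/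
def UH : Set ℂ := {z | 0 < z.im}

lemma isOpen_UH : IsOpen UH := isOpen_lt continuous_const Complex.continuous_im

lemma raiseOp_congr {f g : ℂ → ℂ} {V : Set ℂ} (hV : IsOpen V) (h : Set.EqOn f g V) (κ : ℤ) :
    Set.EqOn (raiseOp κ f) (raiseOp κ g) V := by
  intro τ hτ
  have : f =ᶠ[nhds τ] g := h.eventuallyEq_of_mem (hV.mem_nhds hτ)
  simp only [raiseOp, dtau, this.fderiv_eq, h hτ]

lemma raiseIter_congr {f g : ℂ → ℂ} {V : Set ℂ} (hV : IsOpen V) (h : Set.EqOn f g V) (κ : ℤ)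
    (m : ℕ) : Set.EqOn (raiseIter κ m f) (raiseIter κ m g) V := by
  induction m with
  | zero => exact h
  | succ m ih => exact raiseOp_congr hV ih _

lemma raiseOp_smooth {f : ℂ → ℂ} (hf : ContDiffOn ℝ (⊤ : ℕ∞) f UH) (κ : ℤ) :
    ContDiffOn ℝ (⊤ : ℕ∞) (raiseOp κ f) UH := by
  have h1 : ContDiffOn ℝ (⊤ : ℕ∞) (fderiv ℝ f) UH := hf.fderiv_of_isOpen isOpen_UH (by simp)
  have h2 : ∀ w : ℂ, ContDiffOn ℝ (⊤ : ℕ∞) (fun z => fderiv ℝ f z w) UH :=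
    fun w => h1.clm_apply contDiffOn_const
  have h3 : ContDiffOn ℝ (⊤ : ℕ∞) (fun z : ℂ => (z.im : ℂ)) UH :=
    (Complex.ofRealCLM.comp Complex.imCLM).contDiff.contDiffOn
  have h4 : ContDiffOn ℝ (⊤ : ℕ∞) (fun z : ℂ => (z.im : ℂ)⁻¹) UH :=
    h3.inv (fun z hz => by
      have : 0 < z.im := hz
      exact_mod_cast this.ne')
  unfold raiseOp dtau
  exact (contDiffOn_const.mul (((h2 1).sub (contDiffOn_const.mul (h2 Complex.I))).div_const 2)).add
    ((contDiffOn_const.mul h4).mul hf)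

lemma raiseIter_smooth {f : ℂ → ℂ} (hf : ContDiffOn ℝ (⊤ : ℕ∞) f UH) (κ : ℤ) (m : ℕ) :
    ContDiffOn ℝ (⊤ : ℕ∞) (raiseIter κ m f) UH := by
  induction m with
  | zero => exact hf
  | succ m ih => exact raiseOp_smooth ih _

lemma raiseOp_sum {ι : Type*} (s : Finset ι) (f : ι → ℂ → ℂ) (u : ι → ℂ) (κ : ℤ) {τ : ℂ}
    (hf : ∀ i ∈ s, DifferentiableAt ℝ (f i) τ) :
    raiseOp κ (fun z => ∑ i ∈ s, u i * f i z) τ = ∑ i ∈ s, u i * raiseOp κ (f i) τ := by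
  have h : HasFDerivAt (fun z => ∑ i ∈ s, u i * f i z) (∑ i ∈ s, u i • fderiv ℝ (f i) τ) τ :=
    HasFDerivAt.fun_sum fun i hi => (hf i hi).hasFDerivAt.const_mul (u i)
  rw [raiseOp, dtau_of_hasFDerivAt h]
  simp only [raiseOp, dtau, sum_apply, smul_apply,
    smul_eq_mul, Finset.mul_sum]
  rw [← Finset.sum_sub_distrib, Finset.sum_div, Finset.mul_sum, ← Finset.sum_add_distrib]
  refine Finset.sum_congr rfl fun i _ => ?_
  ring

lemma raiseIter_sum {ι : Type*} (s : Finset ι) (f : ι → ℂ → ℂ) (u : ι → ℂ) (κ : ℤ) (m : ℕ)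
    (hf : ∀ i ∈ s, ContDiffOn ℝ (⊤ : ℕ∞) (f i) UH) :
    Set.EqOn (raiseIter κ m (fun z => ∑ i ∈ s, u i * f i z))
      (fun z => ∑ i ∈ s, u i * raiseIter κ m (f i) z) UH := by
  induction m with
  | zero => intro z _; rfl
  | succ m ih =>
    intro τ hτ
    have := raiseOp_congr isOpen_UH ih (κ + 2 * m) hτ
    simp only [raiseIter]
    rw [this]
    apply raiseOp_sum
    intro i hi
    exact ((raiseIter_smooth (hf i hi) κ m).contDiffAt (isOpen_UH.mem_nhds hτ)).differentiableAt
      (by simp)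

/-- the constants -/
def Cst (N : ℕ) : ℕ → ℚ
  | 0 => 1
  | m + 1 => -((N : ℚ) - m) * Cst N m

lemma Cst_succ (N m : ℕ) : Cst N (m + 1) = -((N : ℚ) - m) * Cst N m := rfl

lemma raiseIter_pow (N : ℕ) (x : ℂ) (m : ℕ) (hm : m ≤ N) :
    Set.EqOn (raiseIter (-(N : ℤ)) m (fun z => (z - x) ^ N))
      (fun z => (Cst N m : ℂ) * ((z - x) ^ (N - m) * ((starRingEnd ℂ z - x) ^ m *
        ((z.im : ℂ)⁻¹) ^ m))) UH := by
  induction m with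
  | zero => intro z _; simp [raiseIter, Cst]
  | succ m ih =>
    intro τ hτ
    obtain ⟨r, rfl⟩ : ∃ r, N = m + 1 + r := ⟨N - (m + 1), by omega⟩
    have hc := raiseOp_congr isOpen_UH (ih (by omega)) (-((m + 1 + r : ℕ) : ℤ) + 2 * m) hτ
    simp only [raiseIter]
    rw [hc]
    have hpos : 0 < τ.im := hτ
    have e1 : m + 1 + r - m = r + 1 := by omega
    have e2 : m + 1 + r - (m + 1) = r := by omega
    simp only [e1, e2]
    have d1 : DifferentiableAt ℝ (fun z : ℂ => z - x) τ := by fun_prop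
    have d2 : DifferentiableAt ℝ (fun z : ℂ => starRingEnd ℂ z - x) τ :=
      ((Complex.conjCLE.hasFDerivAt (x := τ)).sub_const x).differentiableAt
    have d3 : DifferentiableAt ℝ (fun z : ℂ => (z.im : ℂ)⁻¹) τ :=
      (hasFDerivAt_iminv hpos).differentiableAt
    have d0 : DifferentiableAt ℝ (fun _ : ℂ => ((Cst (m + 1 + r) m : ℚ) : ℂ)) τ :=
      differentiableAt_const _
    have p1 : DifferentiableAt ℝ (fun z : ℂ => (z - x) ^ (r + 1)) τ := d1.pow _
    have p2 : DifferentiableAt ℝ (fun z : ℂ => (starRingEnd ℂ z - x) ^ m) τ := d2.pow _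
    have p3 : DifferentiableAt ℝ (fun z : ℂ => (z.im : ℂ)⁻¹ ^ m) τ := d3.pow _
    have p4 : DifferentiableAt ℝ (fun z : ℂ => (starRingEnd ℂ z - x) ^ m * (z.im : ℂ)⁻¹ ^ m) τ :=
      p2.mul p3
    have p5 : DifferentiableAt ℝ (fun z : ℂ => (z - x) ^ (r + 1) *
      ((starRingEnd ℂ z - x) ^ m * (z.im : ℂ)⁻¹ ^ m)) τ := p1.mul p4
    rw [raiseOp, dtau_mul' d0 p5, dtau_mul' p1 p4, dtau_mul' p2 p3,
      dtau_pow' d1, dtau_pow' d2, dtau_pow' d3, dtau_sub_const, dtau_conj_sub_const,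
      dtau_iminv hpos]
    have hd : dtau (fun _ : ℂ => ((Cst (m + 1 + r) m : ℚ) : ℂ)) τ = 0 := by simp [dtau]
    rw [hd, Cst_succ]
    have hv : (τ.im : ℂ) ≠ 0 := by exact_mod_cast hpos.ne'
    have hconj : starRingEnd ℂ τ = τ - 2 * Complex.I * τ.im := by
      apply Complex.ext <;> simp; ring
    have hI : Complex.I ^ 2 = -1 := Complex.I_sq
    have hm' : (m : ℂ) * ((τ.im : ℂ)⁻¹) ^ (m - 1) * ((τ.im : ℂ) ^ 2)⁻¹
        = m * ((τ.im : ℂ)⁻¹) ^ (m + 1) := by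
      rcases m with _ | m
      · simp
      · simp only [Nat.add_sub_cancel]; ring
    have hq : starRingEnd ℂ τ - x = (τ - x) - 2 * Complex.I * τ.im := by rw [hconj]; ring
    generalize hQ : starRingEnd ℂ τ - x = Q at *
    generalize hw : τ - x = w at *
    push_cast
    generalize ((Cst (m + 1 + r) m : ℚ) : ℂ) = C at *
    have hvv : (τ.im : ℂ) * (τ.im : ℂ)⁻¹ = 1 := mul_inv_cancel₀ hv
    generalize (τ.im : ℂ) = v at *
    rw [show (m:ℂ) * v⁻¹ ^ (m - 1) * (Complex.I / 2 * (v ^ 2)⁻¹) =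
      Complex.I / 2 * (m * v⁻¹ ^ (m - 1) * (v ^ 2)⁻¹) by ring, hm', pow_succ Q m, pow_succ w r,
      pow_succ v⁻¹ m]
    generalize v⁻¹ ^ m = A at *
    generalize hB : Q ^ m = B
    generalize w ^ r = D
    rw [hq]
    generalize v⁻¹ = y at *
    linear_combination (C * D * w * B * A * y * m) * hI -
      2 * Complex.I * (r+1) * C * D * B * A * hvv

lemma raise_rational (K : ℕ) (τ : ℂ) (hτ : τ ∈ UH) (D : ℂ) (Q : Polynomial ℚ)
    (hQ : ∀ x : ℂ, D * ((τ - x) * (starRingEnd ℂ τ - x) * (τ.im : ℂ)⁻¹) ^ K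
      = Polynomial.aeval x Q)
    (p : Polynomial ℚ) (hp : p.natDegree ≤ 2 * K) :
    ∃ q : ℚ, D * raiseIter (-((2 * K : ℕ) : ℤ)) K (fun z => Polynomial.aeval z p) τ = q := by
  set N := 2 * K with hN
  have hsm : ∀ i : ℕ, ContDiffOn ℝ (⊤ : ℕ∞) (fun z : ℂ => z ^ i) UH :=
    fun i => (contDiff_id.pow i).contDiffOn
  set L : ℕ → ℂ := fun i => D * raiseIter (-(N : ℤ)) K (fun z => z ^ i) τ with hL
  have key : ∀ x : ℂ, ∑ i ∈ Finset.range (N + 1), ((-x) ^ (N - i) * (N.choose i : ℂ)) * L i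
      = (Cst N K : ℂ) * Polynomial.aeval x Q := by
    intro x
    have h1 := raiseIter_pow N x K (by omega) hτ
    have h2 : (fun z : ℂ => (z - x) ^ N) = fun z => ∑ i ∈ Finset.range (N + 1),
        ((-x) ^ (N - i) * (N.choose i : ℂ)) * z ^ i := by
      funext z
      rw [sub_eq_add_neg, add_pow]
      refine Finset.sum_congr rfl fun i _ => by ring
    rw [h2] at h1
    have h3 := raiseIter_sum (Finset.range (N + 1)) (fun i z => z ^ i)
      (fun i => (-x) ^ (N - i) * (N.choose i : ℂ)) (-(N : ℤ)) K (fun i _ => hsm i) hτ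
    rw [h3] at h1
    rw [← hQ x]
    have e : N - K = K := by omega
    simp only [e] at h1
    calc _ = D * ∑ i ∈ Finset.range (N + 1), ((-x) ^ (N - i) * (N.choose i : ℂ)) *
          raiseIter (-(N : ℤ)) K (fun z => z ^ i) τ := by
            rw [Finset.mul_sum]
            refine Finset.sum_congr rfl fun i _ => by simp only [hL]; ring
      _ = _ := by
        rw [h1, mul_pow, mul_pow]; ring
  have hpoly : ∑ i ∈ Finset.range (N + 1),
      Polynomial.monomial (N - i) ((-1) ^ (N - i) * (N.choose i : ℂ) * L i)
      = (Polynomial.C (Cst N K) * Q).map (algebraMap ℚ ℂ) := by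
    apply Polynomial.funext
    intro x
    rw [Polynomial.eval_finsetSum, Polynomial.eval_map, ← Polynomial.aeval_def]
    simp only [map_mul, Polynomial.aeval_C, Polynomial.eval_monomial]
    have := key x
    rw [show (algebraMap ℚ ℂ) (Cst N K) = (Cst N K : ℂ) from rfl, ← this]
    refine Finset.sum_congr rfl fun i _ => ?_
    rw [neg_pow x]; ring
  have hLrat : ∀ i, i ≤ N → ∃ q : ℚ, L i = q := by
    intro i hi
    have h := congrArg (fun P => Polynomial.coeff P (N - i)) hpoly
    simp only [Polynomial.finsetSum_coeff, Polynomial.coeff_monomial, Polynomial.coeff_map] at h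
    rw [Finset.sum_eq_single i] at h
    · rw [if_pos rfl] at h
      set r := (Polynomial.C (Cst N K) * Q).coeff (N - i)
      have hc : (N.choose i : ℂ) ≠ 0 := by exact_mod_cast (Nat.choose_pos hi).ne'
      refine ⟨(-1) ^ (N - i) * r / N.choose i, ?_⟩
      push_cast
      rw [show (r : ℂ) = algebraMap ℚ ℂ r from rfl, ← h]
      field_simp
      rw [← pow_mul]
      simp [pow_mul']
    · intro j hj hji
      rw [if_neg]
      have := Finset.mem_range.1 hj
      omega
    · intro h'
      exact absurd (Finset.mem_range.2 (by omega)) h'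
  choose! ℓ hℓ using hLrat
  refine ⟨∑ i ∈ Finset.range (N + 1), p.coeff i * ℓ i, ?_⟩
  have h2 : (fun z : ℂ => Polynomial.aeval z p) = fun z => ∑ i ∈ Finset.range (N + 1),
        (p.coeff i : ℂ) * z ^ i := by
    funext z
    rw [Polynomial.aeval_eq_sum_range' (Nat.lt_succ_of_le hp)]
    refine Finset.sum_congr rfl fun i _ => ?_
    rw [Algebra.smul_def]; rfl
  rw [h2, raiseIter_sum (Finset.range (N + 1)) (fun i z => z ^ i) _ _ K (fun i _ => hsm i) hτ,
    Finset.mul_sum]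
  push_cast
  refine Finset.sum_congr rfl fun i hi => ?_
  rw [← hℓ i (by have := Finset.mem_range.1 hi; omega)]
  simp only [hL]; ring

lemma jfac_ne_zero (M : SL2Z) {τ : ℂ} (hτ : 0 < τ.im) : jfac M τ ≠ 0 := by
  intro h
  have h1 := congrArg Complex.im h
  have h2 := congrArg Complex.re h
  simp [jfac] at h1 h2
  have hdet := M.2
  rw [Matrix.det_fin_two] at hdet
  rcases h1 with h1 | h1
  · have h3 : M.1 1 0 = 0 := by exact_mod_cast h1
    have h4 : M.1 1 1 = 0 := by
      rw [h1] at h2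
      simp at h2
      exact_mod_cast h2
    rw [h3, h4] at hdet
    simp at hdet
  · exact hτ.ne' h1

lemma moeb_re_num (M : SL2Z) {τ : ℂ} (h : (moeb M τ).re < 0) :
    ((M.1 0 0 : ℝ) * τ.re + M.1 0 1) * ((M.1 1 0 : ℝ) * τ.re + M.1 1 1)
      + (M.1 0 0 : ℝ) * M.1 1 0 * τ.im ^ 2 < 0 := by
  rw [moeb, Complex.div_re, ← add_div] at h
  by_contra hc
  push Not at hc
  refine absurd h (not_lt.2 (div_nonneg ?_ (Complex.normSq_nonneg _)))
  simp
  linarith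

lemma entry_bound (A B C D : ℤ) (hdet : A * D - B * C = 1) (hAC : 0 < A * C)
    (u v v0 U : ℝ) (hv0 : 0 < v0) (hv : v0 ≤ v) (hu : |u| ≤ U)
    (h : ((A : ℝ) * u + B) * (C * u + D) + A * C * v ^ 2 < 0) :
    |(A : ℝ)| ≤ 1 / v0 + U / v0 + 1 ∧ |(B : ℝ)| ≤ 1 / v0 + U / v0 + 1 ∧
    |(C : ℝ)| ≤ 1 / v0 + U / v0 + 1 ∧ |(D : ℝ)| ≤ 1 / v0 + U / v0 + 1 := by
  have hU : 0 ≤ U := (abs_nonneg u).trans hu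
  have hdet' : (A : ℝ) * D - B * C = 1 := by exact_mod_cast hdet
  have hAC' : (0 : ℝ) < A * C := by exact_mod_cast hAC
  have hA0 : A ≠ 0 := by rintro rfl; simp at hAC
  have hC0 : C ≠ 0 := by rintro rfl; simp at hAC
  have hA1 : (1 : ℝ) ≤ |(A : ℝ)| := by exact_mod_cast Int.one_le_abs hA0
  have hC1 : (1 : ℝ) ≤ |(C : ℝ)| := by exact_mod_cast Int.one_le_abs hC0
  have hACabs : |(A : ℝ)| * |(C : ℝ)| = A * C := by rw [← abs_mul, abs_of_pos hAC']
  set m : ℝ := A * C with hm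
  set t : ℝ := A * D + B * C with ht
  have h4 : (2 * m * u + t) ^ 2 + 4 * m ^ 2 * v ^ 2 < 1 := by
    have h5 := mul_neg_of_pos_of_neg hAC' h
    have h6 : (2 * m * u + t) ^ 2 + 4 * m ^ 2 * v ^ 2 =
      4 * (m * ((A * u + B) * (C * u + D) + m * v ^ 2)) + (A * D - B * C : ℝ) ^ 2 := by
      simp only [hm, ht]; ring
    rw [h6, hdet']; linarith
  have h7 : |2 * m * u + t| < 1 := by
    rw [← sq_lt_one_iff_abs_lt_one]
    nlinarith [sq_nonneg (m * v)]
  have hvpos : 0 < v := hv0.trans_le hv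
  have h8 : 2 * m * v < 1 := by
    have : (2 * m * v) ^ 2 < 1 := by nlinarith [sq_nonneg (2 * m * u + t)]
    exact (abs_lt.1 (sq_lt_one_iff_abs_lt_one _ |>.1 this)).2
  have h9 : 2 * m * v0 < 1 := by nlinarith
  have h10 : 2 * m < 1 / v0 := by rwa [lt_div_iff₀ hv0]
  have h11 : |t| < 1 + U / v0 := by
    have e1 : |t| ≤ |2 * m * u + t| + |2 * m * u| := by
      have := abs_sub (2 * m * u + t) (2 * m * u)
      simpa using this
    have e2 : |2 * m * u| ≤ (1 / v0) * U := by
      rw [abs_mul, abs_of_pos (by linarith : (0 : ℝ) < 2 * m)]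
      exact mul_le_mul h10.le hu (abs_nonneg _) (by positivity)
    have e3 : (1 / v0) * U = U / v0 := by ring
    linarith
  have hpos1 : 0 < 1 / v0 := by positivity
  have hpos2 : 0 ≤ U / v0 := by positivity
  have hAD : |(A : ℝ)| * |(D : ℝ)| ≤ 1 + U / v0 := by
    rw [← abs_mul, show (A : ℝ) * D = (1 + t) / 2 by simp only [ht]; linarith, abs_le]
    have := abs_lt.1 h11
    constructor <;> linarith
  have hBC : |(B : ℝ)| * |(C : ℝ)| ≤ 1 + U / v0 := by
    rw [← abs_mul, show (B : ℝ) * C = (t - 1) / 2 by simp only [ht]; linarith, abs_le]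
    have := abs_lt.1 h11
    constructor <;> linarith
  refine ⟨?_, ?_, ?_, ?_⟩
  · nlinarith [abs_nonneg (A : ℝ)]
  · nlinarith [abs_nonneg (B : ℝ)]
  · nlinarith [abs_nonneg (C : ℝ)]
  · nlinarith [abs_nonneg (D : ℝ)]

lemma finite_bounded (R : ℝ) : {M : SL2Z | ∀ i j, |(M.1 i j : ℝ)| ≤ R}.Finite := by
  have h1 : {f : Matrix (Fin 2) (Fin 2) ℤ | ∀ i j, f i j ∈ Set.Icc (-⌈R⌉) ⌈R⌉}.Finite :=
    Set.Finite.pi' (t := fun _ => {g : Fin 2 → ℤ | ∀ j, g j ∈ Set.Icc (-⌈R⌉) ⌈R⌉})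
      (fun _ => Set.Finite.pi' (fun _ => Set.finite_Icc _ _))
  refine (h1.preimage (f := fun M : SL2Z => M.1) Subtype.val_injective.injOn).subset ?_
  intro M hM i j
  have h2 := hM i j
  have h3 : ((|M.1 i j| : ℤ) : ℝ) ≤ ⌈R⌉ := by
    push_cast
    exact h2.trans (Int.le_ceil R)
  have h4 : |M.1 i j| ≤ ⌈R⌉ := by exact_mod_cast h3
  exact abs_le.1 h4

/-- index set -/
def Sset (τ : ℂ) : Set SL2Z := {M | 0 < M.1 0 0 * M.1 1 0 ∧ (moeb M τ).re < 0}

lemma Sset_local (τ₀ : ℂ) (hτ : 0 < τ₀.im) (hre : ∀ M : SL2Z, (moeb M τ₀).re ≠ 0) :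
    ∃ F : Finset SL2Z, ∀ᶠ τ in nhds τ₀, Sset τ = (F : Set SL2Z) := by
  set v0 := τ₀.im / 2 with hv0
  set U := |τ₀.re| + 1 with hU
  set R := 1 / v0 + U / v0 + 1 with hR
  have hfin := finite_bounded R
  have hev1 : ∀ᶠ τ : ℂ in nhds τ₀, v0 < τ.im :=
    Complex.continuous_im.continuousAt.eventually (lt_mem_nhds (by linarith))
  have hev2 : ∀ᶠ τ : ℂ in nhds τ₀, |τ.re| < U :=
    (Complex.continuous_re.abs).continuousAt.eventually (gt_mem_nhds (by simp [hU]))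
  have hsub : ∀ τ : ℂ, v0 < τ.im → |τ.re| < U → Sset τ ⊆ {M : SL2Z | ∀ i j, |(M.1 i j : ℝ)| ≤ R} := by
    rintro τ h1 h2 M ⟨hM1, hM2⟩
    have hdet := M.2
    rw [Matrix.det_fin_two] at hdet
    obtain ⟨b1, b2, b3, b4⟩ := entry_bound _ _ _ _ hdet hM1 τ.re τ.im v0 U (by positivity) h1.le h2.le
      (moeb_re_num M hM2)
    intro i j
    fin_cases i <;> fin_cases j <;> assumption
  have hS0 : (Sset τ₀).Finite := hfin.subset (hsub τ₀ hev1.self_of_nhds hev2.self_of_nhds)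
  have hev3 : ∀ᶠ τ : ℂ in nhds τ₀, ∀ M ∈ {M : SL2Z | ∀ i j, |(M.1 i j : ℝ)| ≤ R},
      ((moeb M τ).re < 0 ↔ (moeb M τ₀).re < 0) := by
    rw [Filter.eventually_all_finite hfin]
    intro M _
    have hc : ContinuousAt (fun τ => (moeb M τ).re) τ₀ := by
      refine Complex.continuous_re.continuousAt.comp ?_
      unfold moeb
      exact ContinuousAt.div (by fun_prop) (by fun_prop) (jfac_ne_zero M hτ)
    rcases lt_or_gt_of_ne (hre M) with h | h
    · filter_upwards [hc.eventually (gt_mem_nhds h)] with τ h'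
      exact iff_of_true h' h
    · filter_upwards [hc.eventually (lt_mem_nhds h)] with τ h'
      exact iff_of_false (not_lt.2 (le_of_lt h')) (not_lt.2 h.le)
  refine ⟨hS0.toFinset, ?_⟩
  filter_upwards [hev1, hev2, hev3] with τ h1 h2 h3
  rw [Set.Finite.coe_toFinset]
  ext M
  constructor
  · intro hM
    exact ⟨hM.1, (h3 M (hsub τ h1 h2 hM)).1 hM.2⟩
  · intro hM
    exact ⟨hM.1, (h3 M (hsub τ₀ hev1.self_of_nhds hev2.self_of_nhds hM)).2 hM.2⟩

lemma bernoulli_natDegree_le (m : ℕ) : (Polynomial.bernoulli m).natDegree ≤ m := by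
  unfold Polynomial.bernoulli
  refine Polynomial.natDegree_sum_le_of_forall_le _ _ fun i _ => ?_
  exact (Polynomial.natDegree_monomial_le _).trans (by omega)

lemma lin_natDegree_le (x y : ℤ) :
    (Polynomial.C (x : ℚ) * Polynomial.X + Polynomial.C (y : ℚ)).natDegree ≤ 1 :=
  Polynomial.natDegree_linear_le

lemma linprod_natDegree_le (x y z w : ℤ) (p q N : ℕ) (h : p + q ≤ N) :
    ((Polynomial.C (x : ℚ) * Polynomial.X + Polynomial.C (y : ℚ)) ^ p *
      (Polynomial.C (z : ℚ) * Polynomial.X + Polynomial.C (w : ℚ)) ^ q).natDegree ≤ N := by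
  refine Polynomial.natDegree_mul_le.trans ?_
  have h1 := Polynomial.natDegree_pow_le_of_le p (lin_natDegree_le x y)
  have h2 := Polynomial.natDegree_pow_le_of_le q (lin_natDegree_le z w)
  omega

/-- polynomial attached to a matrix -/
def Mpoly (k n : ℕ) (M : SL2Z) : Polynomial ℚ :=
  (Polynomial.C (M.1 0 0 : ℚ) * Polynomial.X + Polynomial.C (M.1 0 1 : ℚ)) ^ n *
      (Polynomial.C (M.1 1 0 : ℚ) * Polynomial.X + Polynomial.C (M.1 1 1 : ℚ)) ^ (2 * k - 2 - n)
  - Polynomial.C ((-1) ^ n) *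
    ((Polynomial.C (M.1 0 0 : ℚ) * Polynomial.X + Polynomial.C (M.1 0 1 : ℚ)) ^ (2 * k - 2 - n) *
      (Polynomial.C (M.1 1 0 : ℚ) * Polynomial.X + Polynomial.C (M.1 1 1 : ℚ)) ^ n)

lemma Mpoly_natDegree (k n : ℕ) (hn : n < 2 * k - 2) (M : SL2Z) :
    (Mpoly k n M).natDegree ≤ 2 * k - 2 := by
  unfold Mpoly
  have d1 := linprod_natDegree_le (M.1 0 0) (M.1 0 1) (M.1 1 0) (M.1 1 1) n (2 * k - 2 - n)
    (2 * k - 2) (by omega)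
  have d2 := linprod_natDegree_le (M.1 0 0) (M.1 0 1) (M.1 1 0) (M.1 1 1) (2 * k - 2 - n) n
    (2 * k - 2) (by omega)
  exact (Polynomial.natDegree_sub_le _ _).trans
    (max_le d1 ((Polynomial.natDegree_C_mul_le _ _).trans d2))

lemma Mpoly_eval (k n : ℕ) (hn : n < 2 * k - 2) (M : SL2Z) {τ : ℂ} (hτ : 0 < τ.im) :
    jfac M τ ^ (2 * k - 2) * (moeb M τ ^ n - (-1 : ℂ) ^ n * moeb M τ ^ (2 * k - 2 - n)) =
      Polynomial.aeval τ (Mpoly k n M) := by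
  have hj := jfac_ne_zero M hτ
  obtain ⟨r, hr⟩ : ∃ r, 2 * k - 2 = n + r := ⟨2 * k - 2 - n, by omega⟩
  have e : n + r - n = r := by omega
  have hm : moeb M τ = ((M.1 0 0 : ℂ) * τ + (M.1 0 1 : ℂ)) / jfac M τ := rfl
  have hj' : (M.1 1 0 : ℂ) * τ + (M.1 1 1 : ℂ) = jfac M τ := rfl
  simp only [Mpoly, hr, e, hm, map_sub, map_mul, map_pow, map_add, Polynomial.aeval_C,
    Polynomial.aeval_X, map_neg, map_one, map_intCast, hj', div_pow]
  field_simp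
  ring

lemma Ppoly_local (k n : ℕ) (hn1 : n < 2 * k - 2) (hn0 : 0 < n)
    (τ₀ : ℂ) (hτ : 0 < τ₀.im) (hre : ∀ M : SL2Z, (moeb M τ₀).re ≠ 0)
    (ε : ℂ) (r e1 e2 e3 : ℚ) (hr : (rnE k n : ℂ) = ε * r)
    (h1 : (-Complex.I) ^ (n + 1) = ε * e1) (h2 : Complex.I ^ (n + 1) = ε * e2)
    (h3 : Complex.I ^ (1 - (n : ℤ)) = ε * e3) :
    ∃ p : Polynomial ℚ, p.natDegree ≤ 2 * k - 2 ∧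
      ∀ᶠ τ in nhds τ₀, Ppoly k n τ = ε * Polynomial.aeval τ p := by
  obtain ⟨F, hF⟩ := Sset_local τ₀ hτ hre
  set f : ℤ := ⌊τ₀.re⌋ with hf
  have hfl : ∀ᶠ τ : ℂ in nhds τ₀, ⌊τ.re⌋ = f := by
    have hlt : (f : ℝ) < τ₀.re := by
      refine lt_of_le_of_ne (Int.floor_le _) ?_
      intro heq
      refine hre ⟨!![1, -f; 0, 1], by simp⟩ ?_
      simp [moeb, ← heq]
    have hev1 : ∀ᶠ τ : ℂ in nhds τ₀, (f : ℝ) < τ.re :=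
      Complex.continuous_re.continuousAt.eventually (lt_mem_nhds hlt)
    have hev2 : ∀ᶠ τ : ℂ in nhds τ₀, τ.re < f + 1 :=
      Complex.continuous_re.continuousAt.eventually (gt_mem_nhds (Int.lt_floor_add_one _))
    filter_upwards [hev1, hev2] with τ a1 a2
    exact Int.floor_eq_iff.2 ⟨a1.le, a2⟩
  have hev : ∀ᶠ τ : ℂ in nhds τ₀, 0 < τ.im := isOpen_UH.mem_nhds hτ
  refine ⟨Polynomial.C r
    + Polynomial.C (e1 / (n + 1)) *
        (Polynomial.bernoulli (n + 1)).comp (Polynomial.X - Polynomial.C (f : ℚ))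
    + Polynomial.C (e2 / ((2 * k - 1 - n : ℕ) : ℚ)) *
        (Polynomial.bernoulli (2 * k - 1 - n)).comp (Polynomial.X - Polynomial.C (f : ℚ))
    + Polynomial.C (e3 / 2) * ∑ M ∈ F, Mpoly k n M, ?_, ?_⟩
  · have hb : ∀ m : ℕ, m ≤ 2 * k - 2 → ((Polynomial.bernoulli m).comp
        (Polynomial.X - Polynomial.C (f : ℚ))).natDegree ≤ 2 * k - 2 := by
      intro m hm
      refine Polynomial.natDegree_comp_le.trans ?_
      rw [Polynomial.natDegree_X_sub_C, mul_one]
      exact (bernoulli_natDegree_le m).trans hm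
    refine Polynomial.natDegree_add_le_of_degree_le (Polynomial.natDegree_add_le_of_degree_le
      (Polynomial.natDegree_add_le_of_degree_le (by simp) ?_) ?_) ?_
    · exact (Polynomial.natDegree_C_mul_le _ _).trans (hb _ (by omega))
    · exact (Polynomial.natDegree_C_mul_le _ _).trans (hb _ (by omega))
    · refine (Polynomial.natDegree_C_mul_le _ _).trans ?_
      exact Polynomial.natDegree_sum_le_of_forall_le _ _ fun M _ => Mpoly_natDegree k n hn1 M
  · filter_upwards [hF, hfl, hev] with τ t1 t2 t3
    have hsum : (∑' M : {M : SL2Z // 0 < M.1 0 0 * M.1 1 0 ∧ (moeb M τ).re < 0},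
        jfac M.1 τ ^ (2 * k - 2) *
          (moeb M.1 τ ^ n - (-1 : ℂ) ^ n * moeb M.1 τ ^ (2 * k - 2 - n)))
        = ∑ M ∈ F, Polynomial.aeval τ (Mpoly k n M) := by
      change (∑' M : ↥(Sset τ), (fun M : SL2Z => jfac M τ ^ (2 * k - 2) *
          (moeb M τ ^ n - (-1 : ℂ) ^ n * moeb M τ ^ (2 * k - 2 - n))) M.1) = _
      rw [t1]
      refine (Finset.tsum_subtype' F (fun M : SL2Z => jfac M τ ^ (2 * k - 2) *
          (moeb M τ ^ n - (-1 : ℂ) ^ n * moeb M τ ^ (2 * k - 2 - n)))).trans ?_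
      exact Finset.sum_congr rfl fun M _ => Mpoly_eval k n hn1 M t3
    rw [Ppoly, hsum, hr, h1, h2, h3]
    simp only [bernPer, bernC, t2, map_add, map_mul, Polynomial.aeval_C, Polynomial.aeval_comp,
      map_sub, Polynomial.aeval_X, map_sum, map_intCast, map_div₀, map_natCast, map_one,
      map_ofNat, eq_ratCast]
    ring

lemma raiseOp_const_mul_eq (ε : ℂ) (κ : ℤ) (m : ℕ) (p : Polynomial ℚ) {τ : ℂ} (hτ : τ ∈ UH) :
    raiseIter κ m (fun z => ε * Polynomial.aeval z p) τ =
      ε * raiseIter κ m (fun z => Polynomial.aeval z p) τ := by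
  have h := raiseIter_sum (Finset.range 1) (fun _ z => Polynomial.aeval z p) (fun _ => ε) κ m
    (fun _ _ => ((Polynomial.contDiff_aeval (𝕜 := ℂ) p _).restrict_scalars ℝ).contDiffOn) hτ
  simpa using h

lemma cm_main (k n : ℕ) (hk : 2 ≤ k) (hn0 : 0 < n) (hn1 : n < 2 * k - 2)
    (a b c : ℤ) (ha : 0 < a) (hd : b ^ 2 - 4 * a * c < 0)
    (hre : ∀ M : SL2Z, (moeb M (cmPoint a b c)).re ≠ 0)
    (ε : ℂ) (r e1 e2 e3 : ℚ) (hr : (rnE k n : ℂ) = ε * r)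
    (h1 : (-Complex.I) ^ (n + 1) = ε * e1) (h2 : Complex.I ^ (n + 1) = ε * e2)
    (h3 : Complex.I ^ (1 - (n : ℤ)) = ε * e3) :
    ∃ q : ℚ,
      (((((b ^ 2 - 4 * a * c).natAbs : ℝ)) ^ (((k : ℝ) - 1) / 2) : ℝ) : ℂ) *
        raiseIter (2 - 2 * k) (k - 1) (Ppoly k n) (cmPoint a b c) = (q : ℂ) * ε := by
  obtain ⟨K, rfl⟩ : ∃ K, k = K + 1 := ⟨k - 1, by omega⟩
  set s : ℝ := Real.sqrt ((b ^ 2 - 4 * a * c).natAbs : ℝ) with hs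
  have hdpos : (0 : ℝ) < ((b ^ 2 - 4 * a * c).natAbs : ℝ) := by
    exact_mod_cast Int.natAbs_pos.2 hd.ne
  have hs0 : 0 < s := Real.sqrt_pos.2 hdpos
  have hs2 : s ^ 2 = 4 * a * c - b ^ 2 := by
    rw [hs, Real.sq_sqrt hdpos.le]
    have : ((b ^ 2 - 4 * a * c).natAbs : ℤ) = 4 * a * c - b ^ 2 := by omega
    have h' : (((b ^ 2 - 4 * a * c).natAbs : ℤ) : ℝ) = ((4 * a * c - b ^ 2 : ℤ) : ℝ) := by rw [this]
    rw [Int.cast_natCast] at h'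
    rw [h']
    push_cast
    ring
  have hD : ((b ^ 2 - 4 * a * c).natAbs : ℝ) ^ ((((K + 1 : ℕ) : ℝ) - 1) / 2) = s ^ K := by
    rw [hs, Real.sqrt_eq_rpow, ← Real.rpow_natCast, ← Real.rpow_mul hdpos.le]
    congr 1
    push_cast
    ring
  have haR : (0 : ℝ) < a := by exact_mod_cast ha
  have hτe : cmPoint a b c = ((-(b : ℝ) / (2 * a) : ℝ) : ℂ) + ((s / (2 * a) : ℝ) : ℂ) * Complex.I := by
    rw [cmPoint, ← hs]
    push_cast
    ring
  have him : (cmPoint a b c).im = s / (2 * a) := by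
    rw [hτe, Complex.add_im, Complex.ofReal_im, Complex.im_ofReal_mul, Complex.I_im, mul_one, zero_add]
  have hpos : 0 < (cmPoint a b c).im := by rw [him]; positivity
  have hconj : starRingEnd ℂ (cmPoint a b c) =
      ((-(b : ℝ) / (2 * a) : ℝ) : ℂ) - ((s / (2 * a) : ℝ) : ℂ) * Complex.I := by
    rw [hτe, map_add, map_mul, Complex.conj_ofReal, Complex.conj_ofReal, Complex.conj_I]; ring
  obtain ⟨p, hp, hev⟩ := Ppoly_local (K + 1) n hn1 hn0 _ hpos hre ε r e1 e2 e3 hr h1 h2 h3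
  obtain ⟨V, hV1, hV2, hV3⟩ := mem_nhds_iff.1 hev
  have hcong := raiseIter_congr hV2 (f := Ppoly (K + 1) n)
    (g := fun z => ε * Polynomial.aeval z p) (fun z hz => hV1 hz)
    (2 - 2 * ((K + 1 : ℕ) : ℤ)) K hV3
  rw [raiseOp_const_mul_eq ε _ _ p hpos] at hcong
  have hκ : (2 - 2 * ((K + 1 : ℕ) : ℤ)) = -((2 * K : ℕ) : ℤ) := by push_cast; ring
  obtain ⟨q, hq⟩ := raise_rational K (cmPoint a b c) hpos ((s ^ K : ℝ) : ℂ)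
    ((Polynomial.C 2 * (Polynomial.C (a : ℚ) * Polynomial.X ^ 2 +
      Polynomial.C (b : ℚ) * Polynomial.X + Polynomial.C (c : ℚ))) ^ K) (by
      intro x
      simp only [map_pow, map_mul, map_add, Polynomial.aeval_C, Polynomial.aeval_X, map_intCast,
        map_ofNat]
      push_cast
      rw [← mul_pow, hconj, him, hτe]
      congr 1
      have hsC : (s : ℂ) ≠ 0 := by exact_mod_cast hs0.ne'
      have haC : (a : ℂ) ≠ 0 := by exact_mod_cast ha.ne'
      have hs2C : (s : ℂ) ^ 2 = 4 * a * c - b ^ 2 := by exact_mod_cast hs2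
      push_cast
      have hI : Complex.I ^ 2 = -1 := Complex.I_sq
      field_simp
      ring_nf
      rw [hI, hs2C]
      ring) p (by omega)
  refine ⟨q, ?_⟩
  rw [hD, Nat.add_sub_cancel, hcong, ← hq, hκ]
  ring
/-- rationality of `|d|^{(k-1)/2} (R_{2-2k}^{k-1} P_{1-k,n})(τ_P)`. -/
theorem raised_Ppoly_rational (k n : ℕ) (hk : 2 ≤ k) (hn0 : 0 < n) (hn1 : n < 2 * k - 2)
    (a b c : ℤ) (ha : 0 < a) (hd : b ^ 2 - 4 * a * c < 0)
    (hre : ∀ M : SL2Z, (moeb M (cmPoint a b c)).re ≠ 0) :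
    (Odd n → ∃ q : ℚ,
      (((((b ^ 2 - 4 * a * c).natAbs : ℝ)) ^ (((k : ℝ) - 1) / 2) : ℝ) : ℂ) *
        raiseIter (2 - 2 * k) (k - 1) (Ppoly k n) (cmPoint a b c) = (q : ℂ)) ∧
    (Even n → ∃ q : ℚ,
      (((((b ^ 2 - 4 * a * c).natAbs : ℝ)) ^ (((k : ℝ) - 1) / 2) : ℝ) : ℂ) *
        raiseIter (2 - 2 * k) (k - 1) (Ppoly k n) (cmPoint a b c) = (q : ℂ) * Complex.I) := by
  constructor
  · rintro ⟨m, rfl⟩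
    have hI : Complex.I ^ (2 * m + 1 + 1) = (-1) ^ (m + 1) := by
      rw [show 2 * m + 1 + 1 = 2 * (m + 1) by ring, pow_mul, Complex.I_sq]
    obtain ⟨q, hq⟩ := cm_main k (2 * m + 1) hk hn0 hn1 a b c ha hd hre 1 (rnE k (2 * m + 1))
      ((-1) ^ (m + 1)) ((-1) ^ (m + 1)) ((-1) ^ m) (by simp)
      (by
        rw [Even.neg_pow ⟨m + 1, by ring⟩, hI]; push_cast; ring)
      (by rw [hI]; push_cast; ring)
      (by
        rw [show (1 - ((2 * m + 1 : ℕ) : ℤ)) = -((2 * m : ℕ) : ℤ) by push_cast; ring, zpow_neg,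
          zpow_natCast, pow_mul, Complex.I_sq, ← inv_pow]
        push_cast
        rw [inv_neg, inv_one, one_mul])
    exact ⟨q, by rw [hq, mul_one]⟩
  · rintro ⟨m, rfl⟩
    rw [← two_mul] at *
    have hI : Complex.I ^ (2 * m + 1) = Complex.I * (-1) ^ m := by
      rw [pow_succ, pow_mul, Complex.I_sq, mul_comm]
    exact cm_main k (2 * m) hk hn0 hn1 a b c ha hd hre Complex.I 0
      (-(-1) ^ m) ((-1) ^ m) ((-1) ^ m) (by simp [rnE])
      (by
        rw [Odd.neg_pow ⟨m, by ring⟩, hI]; push_cast; ring)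
      (by rw [hI]; push_cast; ring)
      (by
        rw [zpow_sub₀ Complex.I_ne_zero, zpow_one, zpow_natCast, pow_mul, Complex.I_sq, div_eq_mul_inv,
          ← inv_pow]
        push_cast
        rw [inv_neg, inv_one])

end LHMF
end
end

section
/- Let k ≥ 2 be an integer and let τ ∈ ℂ with 0 < Re τ < 1. Then ∫₀^∞ Σ_{m∈ℤ} y^{2k−2} (iy − τ + m)^{−2k} dy = (2^{2k−1} π / ((2i)^{2k−2} (2k−1))) · (1 − e^{2πiτ})^{−1}. -/
open Complex MeasureTheory
open scoped Real

noncomputable section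

namespace LHMF

/-- Eisenstein-type sum of weight `j` along the vertical line through `-τ`. -/
def auxS (τ : ℂ) (j : ℕ) (y : ℝ) : ℂ :=
  ∑' m : ℤ, ((Complex.I * (y : ℂ) - τ + (m : ℂ)) ^ j)⁻¹

lemma aux_abs_le (τ : ℂ) (y : ℝ) (m : ℤ) :
    |(m : ℝ) + -τ.re| ≤ ‖Complex.I * (y : ℂ) - τ + (m : ℂ)‖ := by
  have h := Complex.abs_re_le_norm (Complex.I * (y : ℂ) - τ + (m : ℂ))
  have e : (Complex.I * (y : ℂ) - τ + (m : ℂ)).re = (m : ℝ) + -τ.re := by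
    simp; ring
  rwa [e] at h

lemma aux_pos (τ : ℂ) (h0 : 0 < τ.re) (h1 : τ.re < 1) (m : ℤ) : 0 < |(m : ℝ) + -τ.re| := by
  rw [abs_pos]
  intro h
  have h2 : (m : ℝ) = τ.re := by linarith
  rw [← h2] at h0 h1
  have h3 : 0 < m := by exact_mod_cast h0
  have h4 : m < 1 := by exact_mod_cast h1
  omega

lemma aux_ne (τ : ℂ) (h0 : 0 < τ.re) (h1 : τ.re < 1) (y : ℝ) (m : ℤ) :
    Complex.I * (y : ℂ) - τ + (m : ℂ) ≠ 0 := by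
  rw [← norm_pos_iff]
  exact (aux_pos τ h0 h1 m).trans_le (aux_abs_le τ y m)

lemma aux_summable_bound (τ : ℂ) (j : ℕ) (hj : 2 ≤ j) :
    Summable fun m : ℤ => (|(m : ℝ) + -τ.re| ^ j)⁻¹ := by
  have h := (Real.summable_one_div_int_add_rpow (-τ.re) (j : ℝ)).mpr (by exact_mod_cast hj)
  refine h.congr fun m => ?_
  rw [Real.rpow_natCast, one_div]

lemma aux_term_le (τ : ℂ) (h0 : 0 < τ.re) (h1 : τ.re < 1) (j : ℕ) (y : ℝ) (m : ℤ) :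
    ‖((Complex.I * (y : ℂ) - τ + (m : ℂ)) ^ j)⁻¹‖ ≤ (|(m : ℝ) + -τ.re| ^ j)⁻¹ := by
  rw [norm_inv, norm_pow]
  have := aux_pos τ h0 h1 m
  have := aux_abs_le τ y m
  gcongr

lemma aux_summable (τ : ℂ) (h0 : 0 < τ.re) (h1 : τ.re < 1) (j : ℕ) (hj : 2 ≤ j) (y : ℝ) :
    Summable fun m : ℤ => ((Complex.I * (y : ℂ) - τ + (m : ℂ)) ^ j)⁻¹ :=
  Summable.of_norm_bounded (aux_summable_bound τ j hj) (aux_term_le τ h0 h1 j y)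

lemma aux_hasDerivAt_term (τ : ℂ) (h0 : 0 < τ.re) (h1 : τ.re < 1) (j : ℕ) (y : ℝ) (m : ℤ) :
    HasDerivAt (fun y : ℝ => ((Complex.I * (y : ℂ) - τ + (m : ℂ)) ^ j)⁻¹)
      (-(j : ℂ) * Complex.I * ((Complex.I * (y : ℂ) - τ + (m : ℂ)) ^ (j + 1))⁻¹) y := by
  have hne := aux_ne τ h0 h1 y m
  have h : HasDerivAt (fun y : ℝ => Complex.I * (y : ℂ) - τ + (m : ℂ)) Complex.I y := by
    have := (((hasDerivAt_id y).ofReal_comp.const_mul Complex.I).sub_const τ).add_const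
      (m : ℂ)
    exact this.congr_deriv (by simp)
  have h2 := (h.fun_pow j).fun_inv (pow_ne_zero _ hne)
  refine h2.congr_deriv ?_
  rcases j with _ | j
  · simp
  · simp only [Nat.add_sub_cancel]
    field_simp
    ring

lemma aux_hasDerivAt_S (τ : ℂ) (h0 : 0 < τ.re) (h1 : τ.re < 1) (j : ℕ) (hj : 2 ≤ j) (y : ℝ) :
    HasDerivAt (auxS τ j) (-(j : ℂ) * Complex.I * auxS τ (j + 1) y) y := by
  have := hasDerivAt_tsum (𝕜 := ℝ) (y₀ := 0)
    (((aux_summable_bound τ (j + 1) (by omega)).mul_left (j : ℝ)))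
    (fun m y => aux_hasDerivAt_term τ h0 h1 j y m)
    (fun m y => by
      rw [norm_mul, norm_mul, norm_neg, Complex.norm_I, mul_one, Complex.norm_natCast]
      exact mul_le_mul_of_nonneg_left (aux_term_le τ h0 h1 (j + 1) y m) (by positivity))
    (aux_summable τ h0 h1 j hj 0) y
  rw [tsum_mul_left] at this
  exact this

lemma aux_mem (τ : ℂ) (h0 : 0 < τ.re) (h1 : τ.re < 1) (y : ℝ) :
    Complex.I * (y : ℂ) - τ ∈ Complex.integerComplement := by
  rw [Complex.mem_integerComplement_iff]
  rintro ⟨n, hn⟩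
  have := aux_ne τ h0 h1 y (-n)
  rw [← hn] at this
  simp at this

lemma aux_hasDerivAt_cot (τ : ℂ) (h0 : 0 < τ.re) (h1 : τ.re < 1) (y : ℝ) :
    HasDerivAt (fun y : ℝ => (π : ℂ) * Complex.cot (π * (Complex.I * (y : ℂ) - τ)))
      (-Complex.I * auxS τ 2 y) y := by
  have hfun : (fun y : ℝ => (π : ℂ) * Complex.cot (π * (Complex.I * (y : ℂ) - τ))) =
      fun y : ℝ => ((Complex.I * (y : ℂ) - τ + ((0 : ℤ) : ℂ)) ^ 1)⁻¹ +
        ∑' n : ℕ+, (((Complex.I * (y : ℂ) - τ + ((-(n : ℤ) : ℤ) : ℂ)) ^ 1)⁻¹ +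
          ((Complex.I * (y : ℂ) - τ + ((n : ℤ) : ℂ)) ^ 1)⁻¹) := by
    funext y
    rw [cot_series_rep (aux_mem τ h0 h1 y)]
    simp [sub_eq_add_neg]
  have hinj1 : Function.Injective (fun n : ℕ+ => (n : ℤ)) := fun a b h => by simpa using h
  have hinj2 : Function.Injective (fun n : ℕ+ => -(n : ℤ)) := fun a b h => by simpa using h
  have hb := aux_summable_bound τ 2 le_rfl
  have hu := (hb.comp_injective hinj2).add (hb.comp_injective hinj1)
  have hs := aux_summable τ h0 h1 2 le_rfl y
  have hd := hasDerivAt_tsum (𝕜 := ℝ) (y₀ := 0) hu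
    (fun (n : ℕ+) y => (aux_hasDerivAt_term τ h0 h1 1 y (-(n : ℤ))).fun_add
      (aux_hasDerivAt_term τ h0 h1 1 y (n : ℤ)))
    (fun n y => by
      refine (norm_add_le _ _).trans (add_le_add ?_ ?_)
      · simpa using aux_term_le τ h0 h1 2 y (-(n : ℤ))
      · simpa using aux_term_le τ h0 h1 2 y (n : ℤ))
    (by
      have h := summable_cotTerm (aux_mem τ h0 h1 0)
      have h2 := summable_pnat_iff_summable_succ (f := fun n : ℕ =>
        ((Complex.I * ((0 : ℝ) : ℂ) - τ + ((-(n : ℤ) : ℤ) : ℂ)) ^ 1)⁻¹ +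
          ((Complex.I * ((0 : ℝ) : ℂ) - τ + ((n : ℤ) : ℂ)) ^ 1)⁻¹)
      refine h2.mpr (h.congr fun n => ?_)
      simp only [cotTerm]
      push_cast
      simp [sub_eq_add_neg]
      ) y
  rw [hfun]
  refine ((aux_hasDerivAt_term τ h0 h1 1 y 0).fun_add hd).congr_deriv ?_
  rw [auxS, tsum_int_eq_zero_add_tsum_pnat hs, ]
  have h3 := Summable.tsum_add ((hs.comp_injective hinj2).mul_left (-((1 : ℕ) : ℂ) * Complex.I))
    ((hs.comp_injective hinj1).mul_left (-((1 : ℕ) : ℂ) * Complex.I))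
  rw [tsum_mul_left, tsum_mul_left] at h3
  simp only [Function.comp_def] at h3
  norm_num only at h3 ⊢
  rw [h3]
  push_cast
  ring

lemma aux_norm_q (τ : ℂ) (y : ℝ) :
    ‖Complex.exp (2 * π * Complex.I * (Complex.I * (y : ℂ) - τ))‖ =
      Real.exp (2 * π * τ.im) * Real.exp (-(2 * π) * y) := by
  rw [Complex.norm_exp, ← Real.exp_add]
  congr 1
  simp
  ring

lemma aux_decay (τ : ℂ) (j : ℕ) (hj : 2 ≤ j) :
    auxS τ j =O[Filter.atTop] fun y : ℝ => Real.exp (-(2 * π) * y) := by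
  obtain ⟨k, rfl⟩ : ∃ k, j = k + 1 := ⟨j - 1, by omega⟩
  have hk : 1 ≤ k := by omega
  set r : ℝ := Real.exp (-(2 * π)) with hr
  have hr0 : 0 < r := Real.exp_pos _
  have hr1 : r < 1 := by rw [hr, Real.exp_lt_one_iff]; linarith [Real.pi_pos]
  have hsum : Summable fun n : ℕ => (n : ℝ) ^ k * r ^ n :=
    summable_pow_mul_geometric_of_norm_lt_one k (by rwa [Real.norm_of_nonneg hr0.le])
  refine Asymptotics.IsBigO.of_bound
    (‖((-2 * (π : ℂ) * Complex.I) ^ (k + 1) / (Nat.factorial k : ℂ))‖ *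
      (Real.exp (2 * π * τ.im) / r * ∑' n : ℕ, (n : ℝ) ^ k * r ^ n)) ?_
  filter_upwards [Filter.eventually_ge_atTop (τ.im + 1)] with y hy
  have him : (Complex.I * (y : ℂ) - τ).im = y - τ.im := by simp
  have hz : 0 < (Complex.I * (y : ℂ) - τ).im := by rw [him]; linarith
  have hq := EisensteinSeries.qExpansion_identity hk ⟨Complex.I * (y : ℂ) - τ, hz⟩
  have hS : auxS τ (k + 1) y = ((-2 * π * Complex.I) ^ (k + 1) / (Nat.factorial k : ℂ)) *
      ∑' n : ℕ, (n : ℂ) ^ k * Complex.exp (2 * π * Complex.I * (Complex.I * (y : ℂ) - τ)) ^ n := by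
    rw [auxS, ← hq]
    simp
  rw [hS, norm_mul]
  generalize ((-2 * (π : ℂ) * Complex.I) ^ (k + 1) / (Nat.factorial k : ℂ)) = c
  rw [mul_assoc ‖c‖]
  refine mul_le_mul_of_nonneg_left ?_ (norm_nonneg _)
  set q := Complex.exp (2 * π * Complex.I * (Complex.I * (y : ℂ) - τ)) with hqdef
  have hqn : ‖q‖ = Real.exp (2 * π * τ.im) * Real.exp (-(2 * π) * y) := aux_norm_q τ y
  have hqr : ‖q‖ ≤ r := by
    rw [hqn, ← Real.exp_add, hr, Real.exp_le_exp]
    nlinarith [Real.pi_pos]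
  have hterm : ∀ n : ℕ, ‖(n : ℂ) ^ k * q ^ n‖ ≤ ‖q‖ / r * ((n : ℝ) ^ k * r ^ n) := by
    intro n
    rcases n with _ | n
    · simp [show k ≠ 0 by omega]
    · rw [norm_mul, norm_pow, norm_pow, Complex.norm_natCast]
      have h : ‖q‖ ^ n ≤ r ^ n := by gcongr
      have e : ‖q‖ / r * (((n + 1 : ℕ) : ℝ) ^ k * r ^ (n + 1)) =
          ((n + 1 : ℕ) : ℝ) ^ k * (r ^ n * ‖q‖) := by field_simp; ring
      rw [e, pow_succ ‖q‖]
      gcongr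
  have := tsum_of_norm_bounded (hsum.mul_left (‖q‖ / r)).hasSum hterm
  rw [tsum_mul_left, hqn] at this
  refine this.trans (le_of_eq ?_)
  rw [Real.norm_of_nonneg (Real.exp_pos _).le]
  ring

lemma aux_decay_pow (τ : ℂ) (n j : ℕ) (hj : 2 ≤ j) :
    (fun y : ℝ => (y : ℂ) ^ n * auxS τ j y) =O[Filter.atTop] fun y : ℝ => Real.exp (-1 * y) := by
  have h1 : (fun y : ℝ => (y : ℂ) ^ n) =O[Filter.atTop] fun y : ℝ => Real.exp y := by
    refine Asymptotics.IsBigO.trans (Asymptotics.IsBigO.of_bound 1 ?_)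
      (Real.isLittleO_pow_exp_atTop (n := n)).isBigO
    filter_upwards with y
    simp
  refine (h1.mul (aux_decay τ j hj)).trans (Asymptotics.IsBigO.of_bound 1 ?_)
  filter_upwards [Filter.eventually_ge_atTop 0] with y hy
  rw [← Real.exp_add, one_mul, Real.norm_of_nonneg (Real.exp_pos _).le,
    Real.norm_of_nonneg (Real.exp_pos _).le, Real.exp_le_exp]
  nlinarith [Real.pi_gt_three]

lemma aux_cont (τ : ℂ) (h0 : 0 < τ.re) (h1 : τ.re < 1) (j : ℕ) (hj : 2 ≤ j) :
    Continuous (auxS τ j) :=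
  continuous_iff_continuousAt.mpr fun y => (aux_hasDerivAt_S τ h0 h1 j hj y).continuousAt

lemma aux_integrable (τ : ℂ) (h0 : 0 < τ.re) (h1 : τ.re < 1) (n j : ℕ) (hj : 2 ≤ j) :
    IntegrableOn (fun y : ℝ => (y : ℂ) ^ n * auxS τ j y) (Set.Ioi 0) := by
  have hc : Continuous (fun y : ℝ => (y : ℂ) ^ n * auxS τ j y) :=
    (Complex.continuous_ofReal.pow n).mul (aux_cont τ h0 h1 j hj)
  have h := integrable_of_isBigO_exp_neg (a := 0) (b := 1) one_pos hc.norm.continuousOn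
    (aux_decay_pow τ n j hj).norm_left
  exact (integrable_norm_iff hc.aestronglyMeasurable).mp h

lemma aux_tendsto_exp : Filter.Tendsto (fun y : ℝ => Real.exp (-1 * y)) Filter.atTop (nhds 0) := by
  simpa using Real.tendsto_exp_neg_atTop_nhds_zero

lemma aux_step (τ : ℂ) (h0 : 0 < τ.re) (h1 : τ.re < 1) (n : ℕ) :
    ((n : ℂ) + 2) * Complex.I * ∫ y in Set.Ioi (0 : ℝ), (y : ℂ) ^ (n + 1) * auxS τ (n + 3) y =
      ((n : ℂ) + 1) * ∫ y in Set.Ioi (0 : ℝ), (y : ℂ) ^ n * auxS τ (n + 2) y := by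
  have hd : ∀ y ∈ Set.Ici (0 : ℝ), HasDerivAt (fun y : ℝ => (y : ℂ) ^ (n + 1) * auxS τ (n + 2) y)
      (((n : ℂ) + 1) * ((y : ℂ) ^ n * auxS τ (n + 2) y) -
        ((n : ℂ) + 2) * Complex.I * ((y : ℂ) ^ (n + 1) * auxS τ (n + 3) y)) y := by
    intro y _
    have hp : HasDerivAt (fun y : ℝ => (y : ℂ)) 1 y := by
      exact (hasDerivAt_id y).ofReal_comp.congr_deriv (by simp)
    have := (hp.fun_pow (n + 1)).fun_mul (aux_hasDerivAt_S τ h0 h1 (n + 2) (by omega) y)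
    refine this.congr_deriv ?_
    rw [Nat.add_sub_cancel]
    push_cast
    ring
  have i1 := (aux_integrable τ h0 h1 n (n + 2) (by omega)).const_mul ((n : ℂ) + 1)
  have i2 := (aux_integrable τ h0 h1 (n + 1) (n + 3) (by omega)).const_mul
    (((n : ℂ) + 2) * Complex.I)
  have := integral_Ioi_of_hasDerivAt_of_tendsto' hd (i1.sub i2)
    ((aux_decay_pow τ (n + 1) (n + 2) (by omega)).trans_tendsto aux_tendsto_exp)
  rw [integral_sub i1 i2, integral_const_mul, integral_const_mul] at this
  simp at this
  linear_combination -this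

lemma aux_base (τ : ℂ) (h0 : 0 < τ.re) (h1 : τ.re < 1) :
    ∫ y in Set.Ioi (0 : ℝ), (y : ℂ) ^ 0 * auxS τ 2 y =
      2 * π * (1 - Complex.exp (2 * (π : ℂ) * Complex.I * τ))⁻¹ := by
  have hi := (aux_integrable τ h0 h1 0 2 le_rfl).const_mul (-Complex.I)
  have hq : Filter.Tendsto
      (fun y : ℝ => Complex.exp (2 * π * Complex.I * (Complex.I * (y : ℂ) - τ)))
      Filter.atTop (nhds 0) := by
    rw [tendsto_zero_iff_norm_tendsto_zero]
    simp_rw [aux_norm_q]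
    have : Filter.Tendsto (fun y : ℝ => Real.exp (-(2 * π) * y)) Filter.atTop (nhds 0) :=
      Real.tendsto_exp_atBot.comp
        (Filter.tendsto_id.const_mul_atTop_of_neg (by linarith [Real.pi_pos]))
    simpa using this.const_mul (Real.exp (2 * π * τ.im))
  have ht : Filter.Tendsto (fun y : ℝ => (π : ℂ) * Complex.cot (π * (Complex.I * (y : ℂ) - τ)))
      Filter.atTop (nhds ((π : ℂ) * ((0 + 1) / (Complex.I * (1 - 0))))) := by
    simp_rw [Complex.cot_pi_eq_exp_ratio]
    exact ((hq.add_const 1).div ((hq.const_sub 1).const_mul Complex.I) (by simp)).const_mul _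
  have := integral_Ioi_of_hasDerivAt_of_tendsto' (a := 0)
    (fun y _ => (by simpa using aux_hasDerivAt_cot τ h0 h1 y :
      HasDerivAt (fun y : ℝ => (π : ℂ) * Complex.cot (π * (Complex.I * (y : ℂ) - τ)))
        (-Complex.I * ((y : ℂ) ^ 0 * auxS τ 2 y)) y)) hi ht
  rw [integral_const_mul, Complex.cot_pi_eq_exp_ratio] at this
  set J := ∫ y in Set.Ioi (0 : ℝ), (y : ℂ) ^ 0 * auxS τ 2 y
  have hne : 1 - Complex.exp (2 * (π : ℂ) * Complex.I * τ) ≠ 0 := by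
    intro h
    have h2 : Complex.exp (2 * (π : ℂ) * Complex.I * τ) = 1 := by linear_combination -h
    rw [Complex.exp_eq_one_iff] at h2
    obtain ⟨n, hn⟩ := h2
    have h3 : τ = n := by
      have : (2 * (π : ℂ) * Complex.I) ≠ 0 := Complex.two_pi_I_ne_zero
      apply mul_left_cancel₀ this
      linear_combination hn
    have := aux_ne τ h0 h1 0 n
    rw [h3] at this
    simp at this
  have he : Complex.exp (2 * (π : ℂ) * Complex.I * (Complex.I * ((0 : ℝ) : ℂ) - τ)) =
      (Complex.exp (2 * (π : ℂ) * Complex.I * τ))⁻¹ := by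
    rw [← Complex.exp_neg]; congr 1; push_cast; ring
  rw [he] at this
  have hE := Complex.exp_ne_zero (2 * (π : ℂ) * Complex.I * τ)
  set E := Complex.exp (2 * (π : ℂ) * Complex.I * τ)
  have hne2 : 1 - E⁻¹ ≠ 0 := by
    intro h
    apply hne
    have : E * (1 - E⁻¹) = E - 1 := by field_simp
    rw [h] at this
    linear_combination this
  have hne3 : E - 1 ≠ 0 := fun h => hne (by linear_combination -h)
  have hI := Complex.I_ne_zero
  have hr : (E⁻¹ + 1) / (Complex.I * (1 - E⁻¹)) = Complex.I * (1 + E) / (1 - E) := by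
    rw [div_eq_div_iff (mul_ne_zero hI hne2) hne]
    field_simp
    rw [Complex.I_sq]; ring
  have hr0 : ((0 : ℂ) + 1) / (Complex.I * (1 - 0)) = -Complex.I := by simp
  rw [hr, hr0] at this
  have hJ : J = Complex.I * (-Complex.I * J) := by
    linear_combination J * Complex.I_sq
  rw [hJ, this]
  field_simp
  linear_combination (-2 : ℂ) * Complex.I_sq

lemma aux_eval (τ : ℂ) (h0 : 0 < τ.re) (h1 : τ.re < 1) (n : ℕ) :
    ∫ y in Set.Ioi (0 : ℝ), (y : ℂ) ^ n * auxS τ (n + 2) y =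
      2 * π / (Complex.I ^ n * ((n : ℂ) + 1)) *
        (1 - Complex.exp (2 * (π : ℂ) * Complex.I * τ))⁻¹ := by
  induction n with
  | zero => rw [aux_base τ h0 h1]; simp
  | succ n ih =>
    have h := aux_step τ h0 h1 n
    rw [ih] at h
    have hn1 : (n : ℂ) + 1 ≠ 0 := by exact_mod_cast Nat.succ_ne_zero n
    have hn2 : (n : ℂ) + 2 ≠ 0 := by exact_mod_cast Nat.succ_ne_zero (n + 1)
    have hn3 : ((n + 1 : ℕ) : ℂ) + 1 = (n : ℂ) + 2 := by push_cast; ring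
    have hI := Complex.I_ne_zero
    apply mul_left_cancel₀ (mul_ne_zero hn2 hI)
    rw [hn3]
    refine h.trans ?_
    generalize (1 - Complex.exp (2 * (π : ℂ) * Complex.I * τ))⁻¹ = e
    field_simp
    ring

/-- evaluation of `∫₀^∞ Σ_{m∈ℤ} y^{2k-2} (iy-τ+m)^{-2k} dy`. -/
theorem integral_tsum_eval (k : ℕ) (hk : 2 ≤ k) (τ : ℂ) (h0 : 0 < τ.re) (h1 : τ.re < 1) :
    ∫ y in Set.Ioi (0 : ℝ),
        ∑' m : ℤ, (y : ℂ) ^ (2 * k - 2) * (Complex.I * (y : ℂ) - τ + (m : ℂ)) ^ (-2 * (k : ℤ)) =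
      2 ^ (2 * k - 1) * (π : ℂ) / ((2 * Complex.I) ^ (2 * k - 2) * (2 * (k : ℂ) - 1)) *
        (1 - Complex.exp (2 * (π : ℂ) * Complex.I * τ))⁻¹ := by
  obtain ⟨n, hn⟩ : ∃ n, 2 * k = n + 2 := ⟨2 * k - 2, by omega⟩
  have hz : ∀ z : ℂ, z ^ (-2 * (k : ℤ)) = (z ^ (n + 2))⁻¹ := by
    intro z
    rw [show -2 * (k : ℤ) = -((n + 2 : ℕ) : ℤ) by rw [← hn]; push_cast; ring, zpow_neg,
      zpow_natCast]
  have hc : 2 * (k : ℂ) - 1 = (n : ℂ) + 1 := by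
    have : ((2 * k : ℕ) : ℂ) = ((n + 2 : ℕ) : ℂ) := by rw [hn]
    push_cast at this
    linear_combination this
  have e1 : 2 * k - 2 = n := by omega
  have e2 : 2 * k - 1 = n + 1 := by omega
  have h := aux_eval τ h0 h1 n
  simp only [auxS, ← tsum_mul_left] at h
  simp only [hz, e1, e2, hc]
  rw [h, mul_pow]
  have hn1 : (n : ℂ) + 1 ≠ 0 := by exact_mod_cast Nat.succ_ne_zero n
  have hI := Complex.I_ne_zero
  congr 1
  field_simp
  ring

end LHMF
end
end

section
/- For every τ in the complex upper half-plane ℍ, the set { M = (a,b;c,d) ∈ SL₂(ℤ) : ac > 0 and Re(Mτ) < 0 } is finite; moreover, this set is empty whenever Im τ > 1/2. -/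
open Complex MeasureTheory
open scoped Real

noncomputable section

namespace LHMF

/-- The key inequality `(aY + cX)^2 + 4 (ac)^2 v^2 < 1`, where `X = au+b`, `Y = cu+d`. -/
theorem finite_sum_key (M : SL2Z) (τ : ℂ) (hτ : 0 < τ.im)
    (h1 : 0 < M.1 0 0 * M.1 1 0) (h2 : (moeb M τ).re < 0) :
    ((M.1 0 0 : ℝ) * (M.1 1 0 * τ.re + M.1 1 1) - M.1 1 0 * (M.1 0 0 * τ.re + M.1 0 1) = 1) ∧
    ((M.1 0 0 : ℝ) * (M.1 1 0 * τ.re + M.1 1 1) + M.1 1 0 * (M.1 0 0 * τ.re + M.1 0 1)) ^ 2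
      + 4 * ((M.1 0 0 : ℝ) * M.1 1 0) ^ 2 * τ.im ^ 2 < 1 := by
  have hdet : (M.1 0 0 : ℝ) * M.1 1 1 - M.1 0 1 * M.1 1 0 = 1 := by
    have h := M.2
    rw [Matrix.det_fin_two] at h
    exact_mod_cast h
  have hn : (0 : ℝ) < (M.1 0 0 : ℝ) * M.1 1 0 := by exact_mod_cast h1
  unfold moeb at h2
  rw [Complex.div_re, ← add_div] at h2
  have h3 := (div_neg_iff.mp h2).resolve_left (fun h => absurd h.2 (not_lt.mpr (Complex.normSq_nonneg _)))
  have h4 := h3.1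
  simp at h4
  generalize (M.1 0 0 : ℝ) = a at *
  generalize (M.1 0 1 : ℝ) = b at *
  generalize (M.1 1 0 : ℝ) = c at *
  generalize (M.1 1 1 : ℝ) = d at *
  have e : a * (c * τ.re + d) - c * (a * τ.re + b) = 1 := by linarith
  refine ⟨e, ?_⟩
  have h5 := mul_neg_of_pos_of_neg hn h4
  have e2 : (a * (c * τ.re + d) - c * (a * τ.re + b)) ^ 2 = 1 := by rw [e]; norm_num
  nlinarith

theorem finite_sum_bound (M : SL2Z) (τ : ℂ) (hτ : 0 < τ.im)
    (h1 : 0 < M.1 0 0 * M.1 1 0) (h2 : (moeb M τ).re < 0) (i j : Fin 2) :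
    |(M.1 i j : ℝ)| ≤ 1 + 1 / (2 * τ.im) * (1 + |τ.re|) := by
  obtain ⟨e, h⟩ := finite_sum_key M τ hτ h1 h2
  have ha0 : M.1 0 0 ≠ 0 := by rintro h; simp [h] at h1
  have hc0 : M.1 1 0 ≠ 0 := by rintro h; simp [h] at h1
  have ha : (1 : ℝ) ≤ |(M.1 0 0 : ℝ)| := by exact_mod_cast Int.one_le_abs ha0
  have hc : (1 : ℝ) ≤ |(M.1 1 0 : ℝ)| := by exact_mod_cast Int.one_le_abs hc0
  have hn : (0 : ℝ) < (M.1 0 0 : ℝ) * M.1 1 0 := by exact_mod_cast h1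
  have key : ∀ a b c d : ℝ, 1 ≤ |a| → 1 ≤ |c| → 0 < a * c →
      a * (c * τ.re + d) - c * (a * τ.re + b) = 1 →
      (a * (c * τ.re + d) + c * (a * τ.re + b)) ^ 2 + 4 * (a * c) ^ 2 * τ.im ^ 2 < 1 →
      |a| ≤ 1 / (2 * τ.im) ∧ |c| ≤ 1 / (2 * τ.im) ∧ |a * τ.re + b| ≤ 1 ∧ |c * τ.re + d| ≤ 1 := by
    intro a b c d ha hc hn e h
    have hK : |a| * |c| ≤ 1 / (2 * τ.im) := by
      rw [← abs_mul, abs_of_pos hn, le_div_iff₀ (by positivity)]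
      nlinarith [sq_nonneg (a * (c * τ.re + d) + c * (a * τ.re + b)), mul_pos hn hτ]
    have hs : |a * (c * τ.re + d) + c * (a * τ.re + b)| ≤ 1 := by
      apply abs_le_of_sq_le_sq' _ zero_le_one |> abs_le.mpr
      nlinarith [mul_nonneg (sq_nonneg (a * c)) (sq_nonneg τ.im)]
    obtain ⟨s1, s2⟩ := abs_le.mp hs
    have hX : |c| * |a * τ.re + b| ≤ 1 := by
      rw [← abs_mul, abs_le]; constructor <;> linarith
    have hY : |a| * |c * τ.re + d| ≤ 1 := by
      rw [← abs_mul, abs_le]; constructor <;> linarith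
    refine ⟨?_, ?_, ?_, ?_⟩
    · nlinarith
    · nlinarith
    · nlinarith [abs_nonneg (a * τ.re + b)]
    · nlinarith [abs_nonneg (c * τ.re + d)]
  obtain ⟨k1, k2, k3, k4⟩ := key _ _ _ _ ha hc hn e h
  have hK : 0 < 1 / (2 * τ.im) := by positivity
  have hu := abs_nonneg τ.re
  have aux : ∀ a b : ℝ, |a| ≤ 1 / (2 * τ.im) → |a * τ.re + b| ≤ 1 →
      |a| ≤ 1 + 1 / (2 * τ.im) * (1 + |τ.re|) ∧ |b| ≤ 1 + 1 / (2 * τ.im) * (1 + |τ.re|) := by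
    intro a b h1 h2
    have h3 := mul_le_mul_of_nonneg_right h1 hu
    have h4 : |b| ≤ |a * τ.re + b| + |a| * |τ.re| := by
      rw [← abs_mul]
      have := abs_sub (a * τ.re + b) (a * τ.re)
      rwa [add_sub_cancel_left] at this
    have h5 := mul_nonneg hK.le hu
    constructor <;> nlinarith
  have A := aux _ _ k1 k3
  have C := aux _ _ k2 k4
  fin_cases i <;> fin_cases j
  · exact A.1
  · exact A.2
  · exact C.1
  · exact C.2

/-- finiteness of `{M : ac > 0, Re(Mτ) < 0}`, and emptiness for `Im τ > 1/2`. -/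
theorem finite_sum_set (τ : ℂ) (hτ : 0 < τ.im) :
    {M : SL2Z | 0 < M.1 0 0 * M.1 1 0 ∧ (moeb M τ).re < 0}.Finite ∧
    (1 / 2 < τ.im → {M : SL2Z | 0 < M.1 0 0 * M.1 1 0 ∧ (moeb M τ).re < 0} = ∅) := by
  refine ⟨?_, ?_⟩
  · have hfin : (Set.univ.pi (fun _ : Fin 2 => Set.univ.pi (fun _ : Fin 2 =>
        Set.Icc (-⌈1 + 1 / (2 * τ.im) * (1 + |τ.re|)⌉) ⌈1 + 1 / (2 * τ.im) * (1 + |τ.re|)⌉))).Finite :=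
      Set.Finite.pi' (fun _ => Set.Finite.pi' (fun _ => Set.finite_Icc _ _)) |>.subset
        (fun x hx i j => hx i trivial j trivial)
    refine Set.Finite.of_finite_image (f := fun M : SL2Z => (fun i j => M.1 i j)) (hfin.subset ?_) ?_
    · rintro _ ⟨M, ⟨h1, h2⟩, rfl⟩ i _ j _
      have h := (finite_sum_bound M τ hτ h1 h2 i j).trans (Int.le_ceil _)
      exact abs_le.mp (by exact_mod_cast h)
    · intro M _ N _ h
      apply Subtype.ext
      ext i j
      exact congrFun (congrFun h i) j
  · intro hv
    rw [Set.eq_empty_iff_forall_notMem]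
    rintro M ⟨h1, h2⟩
    have h := (finite_sum_key M τ hτ h1 h2).2
    have hn : (1 : ℝ) ≤ (M.1 0 0 : ℝ) * M.1 1 0 := by exact_mod_cast h1
    have h3 : (1 : ℝ) ≤ ((M.1 0 0 : ℝ) * M.1 1 0) ^ 2 := by nlinarith
    have h4 : (1 : ℝ) ≤ 4 * τ.im ^ 2 := by nlinarith
    nlinarith [sq_nonneg ((M.1 0 0 : ℝ) * (M.1 1 0 * τ.re + M.1 1 1) + M.1 1 0 * (M.1 0 0 * τ.re + M.1 0 1))]

end LHMF
end
end
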